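/- arXiv:0906.3873 — 4 statements merged into one kernel-verified Lean document; each statement's English description precedes it below -/
import Mathlib

section
/- Let SG₂(n) be the two-dimensional Sierpinski gasket at stage n. Then the number of perfect matchings of SG₂(n) equals 2^((3^n − 1)/2) if n is odd, and equals 0 if n is even. -/
/-!
Count, more generally, the matchings of `SG₂(n)` whose set of uncovered vertices is exactly a
prescribed set `S` of corners (`cornerMatchings`). Every edge of `SG₂(n+1)` lies in exactly one of
the three copies of `SG₂(n)`, so such a matching is a triple of matchings of the copies in which
each of the three junction vertices is covered by exactly one of the two copies meeting there.
Recording which copy covers each junction (`missing`) gives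
`m (n+1) S = ∑ o, ∏ a, m n (missing S o a)`, the sum being over the `8` orientations `o` of the
junctions (`ncard_cornerMatchings_step`).

By parity, `m n S = 0` unless `|S|` has the parity opposite to that of `n`. Prescribing the parity
of the number of missed corners in every copy leaves exactly `2` of the `8` orientations when the
parity of `S` is the right one, and none otherwise (`card_orientations`). Hence all the nonzero
`m n S` have a common value `x n`, with `x 0 = 1` and `x (n+1) = 2 * x n ^ 3`, that is
`x n = 2 ^ ((3 ^ n - 1) / 2)`. Perfect matchings are the case `S = ∅`.
-/

open SimpleGraph

/-- The number of perfect matchings of a simple graph `G`. -/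
noncomputable def numPM {V : Type*} (G : SimpleGraph V) : ℕ :=
  Set.ncard {M : G.Subgraph | M.IsPerfectMatching}

/-- A graph together with three designated corner vertices. -/
structure GasketData : Type 1 where
  V : Type
  G : SimpleGraph V
  corner : Fin 3 → V

namespace GasketData

/-- The gluing relation on three copies of a gasket stage: for `a ≠ b`, the corner `c_b` of
copy `a` is identified with the corner `c_a` of copy `b`. -/
def glueRel (D : GasketData) (x y : Fin 3 × D.V) : Prop :=
  ∃ a b : Fin 3, a ≠ b ∧ x = (a, D.corner b) ∧ y = (b, D.corner a)

/-- The next stage of the Sierpinski gasket: the juxtaposition of three copies of the current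
stage, glued along corners; adjacency is inherited from the copies, and the corner `c_a` of
the new stage is the corner `c_a` of copy `a`. -/
def step (D : GasketData) : GasketData where
  V := Quot D.glueRel
  G := SimpleGraph.fromRel (fun x y =>
    ∃ (a : Fin 3) (p q : D.V),
      x = Quot.mk D.glueRel (a, p) ∧ y = Quot.mk D.glueRel (a, q) ∧ D.G.Adj p q)
  corner := fun a => Quot.mk D.glueRel (a, D.corner a)

end GasketData

/-- The two-dimensional Sierpinski gasket `SG₂(n)` at stage `n`, with its three corner
vertices.  Stage 0 is the triangle `K₃`; stage `n+1` is obtained by gluing three copies of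
stage `n` along their corners. -/
def sierpinskiGasket : ℕ → GasketData
  | 0 => ⟨Fin 3, ⊤, id⟩
  | n + 1 => (sierpinskiGasket n).step

namespace GasketData

/-! ### Matchings missing prescribed corners -/

/-- The matchings of `D`, viewed as spanning subgraphs, that cover every vertex which is not a
corner, and leave uncovered exactly the corners `c_i` with `S i = true`. -/
def cornerMatchings (D : GasketData) (S : Fin 3 → Bool) : Set (SimpleGraph D.V) :=
  {H | H ≤ D.G ∧ (∀ v w w', H.Adj v w → H.Adj v w' → w = w') ∧
    (∀ v, (∀ i, v ≠ D.corner i) → ∃ w, H.Adj v w) ∧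
    ∀ i, (∃ w, H.Adj (D.corner i) w) ↔ S i = false}

/-! ### Vertices and edges of the glued graph -/

/-- The vertex of `D.step` given by the vertex `p` of copy `a`. -/
def emb (D : GasketData) (a : Fin 3) (p : D.V) : D.step.V := Quot.mk D.glueRel (a, p)

variable {D : GasketData}

theorem emb_surjective (x : D.step.V) : ∃ a p, x = D.emb a p := by
  obtain ⟨⟨a, p⟩, rfl⟩ := Quot.exists_rep x
  exact ⟨a, p, rfl⟩

/-- As the corners are distinct, each vertex is glued to at most one other one, so `glueRel` is
transitive up to equality. -/
theorem emb_eq_iff (hD : Function.Injective D.corner) {a b : Fin 3} {p q : D.V} :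
    D.emb a p = D.emb b q ↔
      (a = b ∧ p = q) ∨ (a ≠ b ∧ p = D.corner b ∧ q = D.corner a) := by
  constructor
  · intro h
    have key : ∀ x y : Fin 3 × D.V, Relation.EqvGen D.glueRel x y →
        (x.1 = y.1 ∧ x.2 = y.2) ∨ (x.1 ≠ y.1 ∧ x.2 = D.corner y.1 ∧ y.2 = D.corner x.1) := by
      intro x y hxy
      induction hxy with
      | rel x y h =>
        obtain ⟨a, b, hab, rfl, rfl⟩ := h
        exact Or.inr ⟨hab, rfl, rfl⟩
      | refl x => exact Or.inl ⟨rfl, rfl⟩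
      | symm x y _ ih => grind
      | trans x y z _ _ ih₁ ih₂ =>
        have := @hD x.1 z.1
        grind
    exact key _ _ (Quot.eqvGen_exact h)
  · rintro (⟨rfl, rfl⟩ | ⟨hab, rfl, rfl⟩)
    · rfl
    · exact Quot.sound ⟨a, b, hab, rfl, rfl⟩

theorem emb_injective (hD : Function.Injective D.corner) (a : Fin 3) :
    Function.Injective (D.emb a) := by
  intro p q h
  have := (emb_eq_iff hD).1 h
  tauto

theorem step_corner_eq (a : Fin 3) : D.step.corner a = D.emb a (D.corner a) := rfl

theorem emb_eq_corner_iff (hD : Function.Injective D.corner) {a b : Fin 3} {p : D.V} :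
    D.emb a p = D.step.corner b ↔ a = b ∧ p = D.corner b := by
  rw [step_corner_eq, emb_eq_iff hD]
  have := @hD b a
  grind

theorem step_corner_injective (hD : Function.Injective D.corner) :
    Function.Injective D.step.corner := by
  intro a b h
  exact ((emb_eq_corner_iff hD).1 h).1

/-- The subgraph of `D.step` (as a spanning graph) assembled from a graph on each copy. -/
def glue (hD : Function.Injective D.corner) (H : Fin 3 → SimpleGraph D.V) :
    SimpleGraph D.step.V where
  Adj x y := ∃ a p q, x = D.emb a p ∧ y = D.emb a q ∧ (H a).Adj p q
  symm := ⟨fun _ _ ⟨a, p, q, hx, hy, h⟩ => ⟨a, q, p, hy, hx, h.symm⟩⟩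
  loopless := ⟨fun _ ⟨a, _, _, hx, hy, h⟩ => h.ne (emb_injective hD a (hx.symm.trans hy))⟩

section

variable (hD : Function.Injective D.corner) (H : Fin 3 → SimpleGraph D.V)

/-- Two copies share at most one vertex, so no edge arises from two different copies. -/
theorem glue_adj_emb (a : Fin 3) (p q : D.V) :
    (glue hD H).Adj (D.emb a p) (D.emb a q) ↔ (H a).Adj p q := by
  constructor
  · rintro ⟨b, p', q', hp, hq, h⟩
    rw [emb_eq_iff hD] at hp hq
    have := h.ne
    grind
  · exact fun h => ⟨a, p, q, rfl, rfl, h⟩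

theorem step_G_eq_glue : D.step.G = glue hD (fun _ => D.G) := by
  ext x y
  constructor
  · rintro ⟨-, h | h⟩
    · exact h
    · exact SimpleGraph.Adj.symm (G := glue hD (fun _ => D.G)) h
  · intro h
    exact ⟨h.ne, Or.inl h⟩

theorem glue_injective : Function.Injective (glue hD) := by
  intro H H' h
  funext a
  ext p q
  rw [← glue_adj_emb hD H, h, glue_adj_emb]

theorem glue_le_iff : glue hD H ≤ D.step.G ↔ ∀ a, H a ≤ D.G := by
  rw [step_G_eq_glue hD]
  constructor
  · intro h a p q hpq
    exact (glue_adj_emb hD _ a p q).1 (h ((glue_adj_emb hD H a p q).2 hpq))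
  · rintro h x y ⟨a, p, q, rfl, rfl, hpq⟩
    exact ⟨a, p, q, rfl, rfl, h a hpq⟩

theorem exists_glue_eq {K : SimpleGraph D.step.V} (hK : K ≤ D.step.G) :
    ∃ H, glue hD H = K := by
  refine ⟨fun a => K.comap (D.emb a), ?_⟩
  ext x y
  constructor
  · rintro ⟨a, p, q, rfl, rfl, h⟩
    exact h
  · intro h
    have h' := hK h
    rw [step_G_eq_glue hD] at h'
    obtain ⟨a, p, q, rfl, rfl, -⟩ := h'
    exact ⟨a, p, q, rfl, rfl, h⟩

theorem covered_glue_iff (a : Fin 3) (p : D.V) :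
    (∃ y, (glue hD H).Adj (D.emb a p) y) ↔
      (∃ w, (H a).Adj p w) ∨ ∃ b, a ≠ b ∧ p = D.corner b ∧ ∃ w, (H b).Adj (D.corner a) w := by
  constructor
  · rintro ⟨y, b, p', q', hp, rfl, h⟩
    rw [emb_eq_iff hD] at hp
    rcases hp with ⟨rfl, rfl⟩ | ⟨hab, rfl, rfl⟩
    · exact Or.inl ⟨_, h⟩
    · exact Or.inr ⟨b, hab, rfl, _, h⟩
  · rintro (⟨w, h⟩ | ⟨b, hab, rfl, w, h⟩)
    · exact ⟨_, a, p, w, rfl, rfl, h⟩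
    · exact ⟨_, b, D.corner a, w, (emb_eq_iff hD).2 (Or.inr ⟨hab, rfl, rfl⟩), rfl, h⟩

/-! ### Matchings of the glued graph -/

/-- A glued graph is a matching iff its pieces are matchings and no junction is covered from both
sides. -/
theorem glue_unique_iff :
    (∀ x y y', (glue hD H).Adj x y → (glue hD H).Adj x y' → y = y') ↔
      (∀ a v w w', (H a).Adj v w → (H a).Adj v w' → w = w') ∧
      ∀ a b, a ≠ b → ¬ ((∃ w, (H a).Adj (D.corner b) w) ∧ ∃ w, (H b).Adj (D.corner a) w) := by
  constructor
  · intro h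
    refine ⟨fun a v w w' h₁ h₂ => ?_, ?_⟩
    · exact emb_injective hD a (h (D.emb a v) _ _
        ((glue_adj_emb hD H ..).2 h₁) ((glue_adj_emb hD H ..).2 h₂))
    · rintro a b hab ⟨⟨w, hw⟩, w', hw'⟩
      have e : D.emb a (D.corner b) = D.emb b (D.corner a) :=
        (emb_eq_iff hD).2 (Or.inr ⟨hab, rfl, rfl⟩)
      have := h (D.emb a (D.corner b)) (D.emb a w) (D.emb b w')
        ⟨a, _, _, rfl, rfl, hw⟩ ⟨b, _, _, e, rfl, hw'⟩
      rw [emb_eq_iff hD] at this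
      have := hw.ne
      grind
  · rintro ⟨h₁, h₂⟩ x y y' ⟨a, p, q, rfl, rfl, h⟩ ⟨b, p', q', hp, rfl, h'⟩
    rw [emb_eq_iff hD] at hp
    rcases hp with ⟨rfl, rfl⟩ | ⟨hab, rfl, rfl⟩
    · rw [h₁ _ _ _ _ h h']
    · exact absurd ⟨⟨_, h⟩, _, h'⟩ (h₂ a b hab)

end

/-- The corners missed in copy `a` by a matching of `D.step` missing the corners `S`, where `o`
orients the junctions: `o a = true` iff the junction between copies `a` and `a + 1` is not covered
by copy `a`, hence is covered by copy `a + 1`. -/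
def missing (S o : Fin 3 → Bool) (a b : Fin 3) : Bool :=
  if b = a then S a else if b = a + 1 then o a else !(o b)

/-- Gluing gives a matching missing exactly `S` iff the pieces are matchings whose missed corners
come from some orientation of the junctions, each junction being covered by exactly one copy. -/
theorem glue_mem_iff (hD : Function.Injective D.corner) (H : Fin 3 → SimpleGraph D.V)
    (S : Fin 3 → Bool) :
    glue hD H ∈ D.step.cornerMatchings S ↔
      ∃ o, ∀ a, H a ∈ D.cornerMatchings (missing S o a) := by
  classical
  simp only [cornerMatchings, Set.mem_ofPred_eq, glue_le_iff, glue_unique_iff]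
  have hcorner : ∀ a, (∃ y, (glue hD H).Adj (D.step.corner a) y) ↔
      ∃ w, (H a).Adj (D.corner a) w := by
    intro a
    rw [step_corner_eq, covered_glue_iff]
    have := @hD a
    grind
  constructor
  · rintro ⟨hle, ⟨huniq, hone⟩, hcov, hS⟩
    have hjunction : ∀ a b, a ≠ b →
        ((∃ w, (H a).Adj (D.corner b) w) ↔ ¬ ∃ w, (H b).Adj (D.corner a) w) := by
      intro a b hab
      have h₁ := hcov (D.emb a (D.corner b)) fun i hi => by
        rw [emb_eq_corner_iff hD] at hi
        exact hab (hi.1.trans (hD hi.2).symm)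
      rw [covered_glue_iff] at h₁
      have h₂ := hone a b hab
      have := @hD b
      grind
    refine ⟨fun a => decide (¬ ∃ w, (H a).Adj (D.corner (a + 1)) w), fun a =>
      ⟨hle a, huniq a, fun v hv => ?_, fun i => ?_⟩⟩
    · have h₁ := hcov (D.emb a v) fun i hi => hv i ((emb_eq_corner_iff hD).1 hi).2
      rw [covered_glue_iff] at h₁
      grind
    · unfold missing
      split_ifs with h₁ h₂
      · rw [h₁, ← hcorner, hS]
      · rw [h₂]; simp
      · have h₃ : i + 1 = a := by revert a i; decide
        rw [hjunction a i (Ne.symm h₁)]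
        simp [h₃]
  · rintro ⟨o, h⟩
    have hflip : ∀ a b, a ≠ b → missing S o a b = !(missing S o b a) := by
      intro a b hab
      have h₁ : b = a + 1 ∧ a ≠ b + 1 ∨ a = b + 1 ∧ b ≠ a + 1 := by
        revert a b; decide
      unfold missing
      grind
    have hjunction : ∀ a b, a ≠ b →
        ((∃ w, (H a).Adj (D.corner b) w) ↔ ¬ ∃ w, (H b).Adj (D.corner a) w) := by
      intro a b hab
      rw [(h a).2.2.2 b, (h b).2.2.2 a, hflip a b hab]
      simp
    refine ⟨fun a => (h a).1, ⟨fun a => (h a).2.1, fun a b hab => ?_⟩, fun x hx => ?_, fun i => ?_⟩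
    · rw [hjunction a b hab]; tauto
    · obtain ⟨a, p, rfl⟩ := emb_surjective x
      rw [covered_glue_iff]
      by_cases hp : ∃ b, p = D.corner b
      · obtain ⟨b, rfl⟩ := hp
        have hab : a ≠ b := fun hab => hx b ((emb_eq_corner_iff hD).2 ⟨hab, rfl⟩)
        have := hjunction a b hab
        by_cases h' : ∃ w, (H b).Adj (D.corner a) w
        · exact Or.inr ⟨b, hab, rfl, h'⟩
        · exact Or.inl (this.2 h')
      · push Not at hp
        exact Or.inl ((h a).2.2.1 p hp)
    · rw [hcorner, (h i).2.2.2 i]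
      simp [missing]

/-- The transfer recursion: a sum over the ways of attributing the junctions to the copies. -/
theorem ncard_cornerMatchings_step [Finite D.V] (hD : Function.Injective D.corner)
    (S : Fin 3 → Bool) :
    (D.step.cornerMatchings S).ncard =
      ∑ o : Fin 3 → Bool, ∏ a, (D.cornerMatchings (missing S o a)).ncard := by
  have himage : D.step.cornerMatchings S =
      glue hD '' ⋃ o, Set.univ.pi fun a => D.cornerMatchings (missing S o a) := by
    ext K
    constructor
    · intro hK
      obtain ⟨H, rfl⟩ := exists_glue_eq hD hK.1
      obtain ⟨o, ho⟩ := (glue_mem_iff hD H S).1 hK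
      exact ⟨H, Set.mem_iUnion.2 ⟨o, fun a _ => ho a⟩, rfl⟩
    · rintro ⟨H, hH, rfl⟩
      obtain ⟨o, ho⟩ := Set.mem_iUnion.1 hH
      exact (glue_mem_iff hD H S).2 ⟨o, fun a => ho a trivial⟩
  have hdisj : Pairwise (Function.onFun Disjoint fun o : Fin 3 → Bool =>
      Set.univ.pi fun a => D.cornerMatchings (missing S o a)) := by
    intro o o' hoo'
    refine Set.disjoint_left.2 fun H h h' => hoo' (funext fun a => ?_)
    -- The orientation can be read off from whether copy `a` covers its junction with copy `a + 1`.
    have h₁ := (h a trivial).2.2.2 (a + 1)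
    have h₂ := (h' a trivial).2.2.2 (a + 1)
    have h₃ := h₁.symm.trans h₂
    have h₄ : ∀ a : Fin 3, a + 1 ≠ a := by decide
    simp only [missing, h₄ a, if_false, if_true] at h₃
    revert h₃
    cases o a <;> cases o' a <;> simp
  rw [himage, Set.ncard_image_of_injective _ (glue_injective hD), ← Nat.card_coe_set_eq,
    Nat.card_congr (Set.unionEqSigmaOfDisjoint hdisj), Nat.card_sigma]
  refine Finset.sum_congr rfl fun o _ => ?_
  rw [Nat.card_congr (Equiv.Set.univPi _), Nat.card_pi]
  simp only [Nat.card_coe_set_eq]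

end GasketData

open GasketData

/-! ### Parity of the missed corners -/

/-- Whether an odd number of corners is missed. -/
def oddMissing (S : Fin 3 → Bool) : Bool := (S 0 ^^ S 1) ^^ S 2

/-- Among the orientations of the three junctions, exactly two give every copy the prescribed
parity `e`, provided the parities are globally consistent: each junction is missed once, so the
numbers of missed corners of the copies add up to `|S| + 3`. -/
theorem card_orientations : ∀ (S : Fin 3 → Bool) (e : Bool),
    (Finset.univ.filter fun o : Fin 3 → Bool => ∀ a, oddMissing (missing S o a) = e).card =
      if oddMissing S = !e then 2 else 0 := by
  decide

/-! ### The count for the gaskets -/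

theorem sierpinskiGasket_corner_injective (n : ℕ) :
    Function.Injective (sierpinskiGasket n).corner := by
  induction n with
  | zero => exact Function.injective_id
  | succ n ih => exact step_corner_injective ih

theorem finite_sierpinskiGasket (n : ℕ) : Finite (sierpinskiGasket n).V := by
  induction n with
  | zero => exact inferInstanceAs (Finite (Fin 3))
  | succ n ih => exact inferInstanceAs (Finite (Quot _))

/-- The adjacency matrix of the graph on `Fin 3` whose edges `01`, `02`, `12` are present according
to `x`, `y`, `z`. -/
def triangleAdj (x y z : Bool) : Fin 3 → Fin 3 → Bool :=
  ![![false, x, y], ![x, false, z], ![y, z, false]]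

theorem triangle_matching_iff : ∀ (x y z : Bool) (S : Fin 3 → Bool),
    ((∀ v w w', triangleAdj x y z v w = true → triangleAdj x y z v w' = true → w = w') ∧
        ∀ i, (∃ w, triangleAdj x y z i w = true) ↔ S i = false) ↔
      oddMissing S = true ∧
        ∀ i j, triangleAdj x y z i j = true ↔ i ≠ j ∧ S i = false ∧ S j = false := by
  decide

/-- In the triangle, a matching missing exactly the corners `S` must join the remaining ones to
one another, which is possible iff there are `0` or `2` of them. -/
theorem ncard_cornerMatchings_zero (S : Fin 3 → Bool) :
    ((sierpinskiGasket 0).cornerMatchings S).ncard = if oddMissing S = true then 1 else 0 := by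
  classical
  let K : SimpleGraph (Fin 3) :=
    { Adj := fun i j => i ≠ j ∧ S i = false ∧ S j = false
      symm := ⟨fun _ _ h => ⟨h.1.symm, h.2.2, h.2.1⟩⟩
      loopless := ⟨fun _ h => h.1 rfl⟩ }
  have key : (sierpinskiGasket 0).cornerMatchings S =
      if oddMissing S = true then {K} else ∅ := by
    ext (H : SimpleGraph (Fin 3))
    have hmem : H ∈ (sierpinskiGasket 0).cornerMatchings S ↔
        (∀ v w w', H.Adj v w → H.Adj v w' → w = w') ∧
          ∀ i, (∃ w, H.Adj i w) ↔ S i = false := by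
      constructor
      · rintro ⟨-, h, -, h'⟩
        exact ⟨h, h'⟩
      · rintro ⟨h, h'⟩
        exact ⟨le_top, h, fun v hv => absurd rfl (hv v), h'⟩
    have hK : H = K ↔ ∀ i j, H.Adj i j ↔ i ≠ j ∧ S i = false ∧ S j = false := by
      rw [SimpleGraph.ext_iff, funext_iff]
      simp only [funext_iff, eq_iff_iff]
      rfl
    have : H ∈ (if oddMissing S = true then {K} else ∅ : Set (SimpleGraph (Fin 3))) ↔
        oddMissing S = true ∧ H = K := by
      split_ifs with h <;> simp [h]
    refine hmem.trans (Iff.trans ?_ this.symm)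
    rw [hK]
    obtain ⟨x, y, z, hadj⟩ : ∃ x y z, ∀ i j, H.Adj i j ↔ triangleAdj x y z i j = true := by
      refine ⟨decide (H.Adj 0 1), decide (H.Adj 0 2), decide (H.Adj 1 2), ?_⟩
      have h10 := H.adj_comm 1 0
      have h20 := H.adj_comm 2 0
      have h21 := H.adj_comm 2 1
      simp [Fin.forall_fin_succ, triangleAdj, h10, h20, h21]
    simp only [hadj]
    exact triangle_matching_iff ..
  rw [key]
  split_ifs
  · exact Set.ncard_singleton K
  · exact Set.ncard_empty _

theorem two_pow_succ (n : ℕ) :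
    2 ^ ((3 ^ (n + 1) - 1) / 2) = 2 * (2 ^ ((3 ^ n - 1) / 2)) ^ 3 := by
  obtain ⟨k, hk⟩ : Odd (3 ^ n) := Odd.pow (by decide)
  have h₁ : (3 ^ (n + 1) - 1) / 2 = (3 ^ n - 1) / 2 * 3 + 1 := by
    rw [pow_succ]; omega
  rw [h₁, pow_succ, pow_mul, mul_comm]

theorem ncard_cornerMatchings (n : ℕ) (S : Fin 3 → Bool) :
    ((sierpinskiGasket n).cornerMatchings S).ncard =
      if oddMissing S = decide (Even n) then 2 ^ ((3 ^ n - 1) / 2) else 0 := by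
  induction n generalizing S with
  | zero => simpa using ncard_cornerMatchings_zero S
  | succ n ih =>
    have := finite_sierpinskiGasket n
    have hstep := ncard_cornerMatchings_step (sierpinskiGasket_corner_injective n) S
    have hprod : ∀ o : Fin 3 → Bool,
        ∏ a, ((sierpinskiGasket n).cornerMatchings (missing S o a)).ncard =
          if ∀ a, oddMissing (missing S o a) = decide (Even n)
            then (2 ^ ((3 ^ n - 1) / 2)) ^ 3 else 0 := by
      intro o
      simp only [ih]
      rw [Finset.prod_ite_zero]
      simp
    have heven : decide (Even (n + 1)) = !(decide (Even n)) := by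
      rw [← decide_not, decide_eq_decide, Nat.even_add_one]
    simp only [hprod] at hstep
    rw [← Finset.sum_filter, Finset.sum_const, card_orientations, smul_eq_mul] at hstep
    rw [heven, two_pow_succ]
    refine hstep.trans ?_
    split_ifs <;> simp

/-! ### Perfect matchings -/

theorem numPM_eq_ncard_cornerMatchings (D : GasketData) :
    numPM D.G = (D.cornerMatchings fun _ => false).ncard := by
  have hmem : ∀ H : SimpleGraph D.V, (H ∈ D.cornerMatchings fun _ => false) ↔
      H ≤ D.G ∧ ∀ v, ∃! w, H.Adj v w := by
    intro H
    constructor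
    · rintro ⟨hle, huniq, hcov, hcorner⟩
      refine ⟨hle, fun v => ?_⟩
      have : ∃ w, H.Adj v w := by
        by_cases hv : ∃ i, v = D.corner i
        · obtain ⟨i, rfl⟩ := hv
          exact (hcorner i).2 rfl
        · push Not at hv
          exact hcov v hv
      obtain ⟨w, hw⟩ := this
      exact ⟨w, hw, fun w' hw' => huniq v w' w hw' hw⟩
    · rintro ⟨hle, h⟩
      exact ⟨hle, fun v _ _ h₁ h₂ => (h v).unique h₁ h₂, fun v _ => (h v).exists,
        fun i => iff_of_true (h _).exists rfl⟩
  refine Set.ncard_congr (fun M _ => M.spanningCoe) (fun M hM => ?_) (fun M M' hM hM' h => ?_)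
    (fun H hH => ?_)
  · rw [Set.mem_ofPred_eq, Subgraph.isPerfectMatching_iff] at hM
    exact (hmem _).2 ⟨M.spanningCoe_le, hM⟩
  · ext v w
    · exact iff_of_true (hM.2 v) (hM'.2 v)
    · rw [← Subgraph.spanningCoe_adj, h, Subgraph.spanningCoe_adj]
  · obtain ⟨hle, h⟩ := (hmem H).1 hH
    exact ⟨toSubgraph H hle, Subgraph.isPerfectMatching_iff.2 h, rfl⟩

/-- The number of perfect matchings of the two-dimensional Sierpinski gasket `SG₂(n)` equals
`2 ^ ((3 ^ n − 1) / 2)` if `n` is odd, and `0` if `n` is even. -/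
theorem numPM_sierpinskiGasket (n : ℕ) :
    numPM (sierpinskiGasket n).G =
      if Odd n then 2 ^ ((3 ^ n - 1) / 2) else 0 := by
  rw [numPM_eq_ncard_cornerMatchings, ncard_cornerMatchings]
  have : (oddMissing (fun _ => false) = decide (Even n)) ↔ Odd n := by
    simp [oddMissing]
  simp only [this]
end

section
/- Let a ≥ 2 and b ≥ 2 be integers and let H(a,b) be the honeycomb (hexagonal) lattice on the torus with 2ab vertices. Then the number of perfect matchings of the line graph of the full subdivision S(H(a,b)) — which is the 3.12.12 lattice with toroidal boundary condition R^T with a columns and b rows of hexagons — equals 2^(ab + 1). In the paper's parameters, M(R^T(n,m)) = 2^(mn + m + n + 2) with a = n+1, b = m+1. -/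
/-!
The vertices of the line graph of `S(H)` are the flags `(v, e)`, `v ∈ e`, of the honeycomb `H`:
each vertex of `H` becomes a triangle, and each edge of `H` becomes a link joining its two flags.
In a perfect matching `M` of this graph, each triangle has either one or all three of its flags
matched along links. So the links used by `M` form a set `F` of edges of `H` in which every vertex
has odd degree; conversely each such `F` comes from exactly one `M`, since a triangle with two flags
not matched by links must contain the edge between them (`numPM_eq_ncard`).

The sets `F` are the solutions over `𝔽₂` of `A x = 1`, where `A` is the incidence matrix of `H`
(`ncard_odd`). The kernel of `Aᵀ` consists of the functions on the vertices taking equal values at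
adjacent vertices, i.e. the constants, because `H` is connected (`step_generates`). Hence
`rank A = 2ab - 1` and `dim ker A = 3ab - (2ab - 1) = ab + 1`. The system is solvable, since `H` has
a perfect matching, so it has `2 ^ (ab + 1)` solutions.

An edge of `H` is encoded as `(p, k)`, with `p : ZMod a × ZMod b` its end in the part `0` and
`k : Fin 3` its direction, and a flag as `(e, s)` with `s : Bool` selecting an end of `e`. Thus
`(e, s) ↦ (e, !s)` follows the link, while an order-three permutation `ρ` rotates each triangle.
-/

open SimpleGraph

/-- The full subdivision `S(G)` of a simple graph `G`: every edge is subdivided exactly once.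
Its vertices are `V(G) ⊕ E(G)`, and a vertex `v : V(G)` is adjacent to an edge `e : E(G)`
if and only if `v` is an endpoint of `e`. -/
def fullSubdivision {V : Type*} (G : SimpleGraph V) : SimpleGraph (V ⊕ G.edgeSet) :=
  SimpleGraph.fromRel (fun a b =>
    ∃ (v : V) (e : G.edgeSet), a = Sum.inl v ∧ b = Sum.inr e ∧ v ∈ (e : Sym2 V))

/-- The honeycomb (hexagonal) lattice on the torus `H(a,b)`: its vertices are
`(ZMod a) × (ZMod b) × Fin 2`, and the vertex `(i,j,0)` is adjacent exactly to the three
vertices `(i,j,1)`, `(i−1,j,1)` and `(i,j−1,1)`. -/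
def honeycomb (a b : ℕ) : SimpleGraph (ZMod a × ZMod b × Fin 2) :=
  SimpleGraph.fromRel (fun x y =>
    x.2.2 = 0 ∧ y.2.2 = 1 ∧
      ((y.1 = x.1 ∧ y.2.1 = x.2.1) ∨
       (y.1 = x.1 - 1 ∧ y.2.1 = x.2.1) ∨
       (y.1 = x.1 ∧ y.2.1 = x.2.1 - 1)))

namespace Honeycomb

/-! ### Perfect matchings and parity -/

/-- In a perfect matching `r`, the number of flags of the triangle `w, ρ w, ρ (ρ w)` that are matched
along their link is one or three. -/
lemma matching_odd {E : Type*} (ρ : E × Bool → E × Bool)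
    (h3 : ∀ w, ρ (ρ (ρ w)) = w) (h1 : ∀ w, (ρ w).1 ≠ w.1)
    (r : E × Bool → E × Bool → Prop) (hs : ∀ w w', r w w' → r w' w)
    (hr : ∀ w w', r w w' → w' = (w.1, !w.2) ∨ w' = ρ w ∨ w' = ρ (ρ w))
    (hu : ∀ w, ∃! w', r w w') (w : E × Bool) :
    let S : E × Bool → Prop := fun w => r w (w.1, !w.2)
    (S w ∧ S (ρ w) ∧ S (ρ (ρ w))) ∨ (S w ∧ ¬ S (ρ w) ∧ ¬ S (ρ (ρ w)) ) ∨
    (¬ S w ∧ S (ρ w) ∧ ¬ S (ρ (ρ w)) ) ∨ (¬ S w ∧ ¬ S (ρ w) ∧ S (ρ (ρ w)) ) := by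
  intro S
  -- each flag uses exactly one of its link and the two triangle edges at it
  have key : ∀ u, (S u ∧ ¬ r u (ρ u) ∧ ¬ r u (ρ (ρ u))) ∨ (¬ S u ∧ r u (ρ u) ∧ ¬ r u (ρ (ρ u))) ∨
      (¬ S u ∧ ¬ r u (ρ u) ∧ r u (ρ (ρ u))) := by
    intro u
    obtain ⟨v, hv, huv⟩ := hu u
    have n1 : (u.1, !u.2) ≠ ρ u := fun h => h1 u (by rw [← h])
    have n2 : (u.1, !u.2) ≠ ρ (ρ u) := fun h => h1 (ρ (ρ u)) (by rw [h3, ← h])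
    have n3 : ρ u ≠ ρ (ρ u) := fun h => h1 (ρ u) (by rw [← h])
    have a0 := huv (u.1, !u.2)
    have a1 := huv (ρ u)
    have a2 := huv (ρ (ρ u))
    simp only [S]
    rcases hr u v hv with h | h | h
    · left; subst h; exact ⟨hv, fun h => n1 (a1 h).symm, fun h => n2 (a2 h).symm⟩
    · right; left; subst h; exact ⟨fun h => n1 (a0 h), hv, fun h => n3 (a2 h).symm⟩
    · right; right; subst h; exact ⟨fun h => n2 (a0 h), fun h => n3 (a1 h), hv⟩
  have k0 := key w
  have k1 := key (ρ w)
  have k2 := key (ρ (ρ w))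
  simp only [h3] at k1 k2
  have e01 : r w (ρ w) ↔ r (ρ w) w := ⟨hs _ _, hs _ _⟩
  have e02 : r w (ρ (ρ w)) ↔ r (ρ (ρ w)) w := ⟨hs _ _, hs _ _⟩
  have e12 : r (ρ w) (ρ (ρ w)) ↔ r (ρ (ρ w)) (ρ w) := ⟨hs _ _, hs _ _⟩
  rw [← e01] at k1
  rw [← e02, ← e12] at k2
  tauto

/-- The matching relation determined by the indicator `x` of the set of links used: flags of links in
that set are matched along them, and the others are matched within their triangle. -/
def matchRel {E : Type*} (ρ : E × Bool → E × Bool) (x : E → ZMod 2) (w w' : E × Bool) : Prop :=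
  (w' = (w.1, !w.2) ∧ x w.1 = 1) ∨ ((w' = ρ w ∨ w' = ρ (ρ w)) ∧ x w.1 = 0 ∧ x w'.1 = 0)

lemma zmod_cases (y : ZMod 2) : y = 0 ∨ y = 1 := by
  revert y; decide

lemma matchRel_unique {E : Type*} (ρ : E × Bool → E × Bool)
    (h3 : ∀ w, ρ (ρ (ρ w)) = w) (h1 : ∀ w, (ρ w).1 ≠ w.1) (x : E → ZMod 2)
    (hx : ∀ w, x w.1 + x (ρ w).1 + x (ρ (ρ w)).1 = 1) (w : E × Bool) :
    ∃! w', matchRel ρ x w w' := by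
  have n1 : (w.1, !w.2) ≠ ρ w := fun h => h1 w (by rw [← h])
  have n2 : (w.1, !w.2) ≠ ρ (ρ w) := fun h => h1 (ρ (ρ w)) (by rw [h3, ← h])
  have n3 : ρ w ≠ ρ (ρ w) := fun h => h1 (ρ w) (by rw [← h])
  have hw := hx w
  have h10 : (1 : ZMod 2) ≠ 0 := by decide
  have h2 : (1 + 1 : ZMod 2) = 0 := by decide
  unfold matchRel
  rcases zmod_cases (x w.1) with a | a
  · rcases zmod_cases (x (ρ w).1) with c | c <;> rcases zmod_cases (x (ρ (ρ w)).1) with d | d <;>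
      rw [a, c, d] at hw
    · simp at hw
    · refine ⟨ρ w, Or.inr ⟨Or.inl rfl, a, c⟩, ?_⟩
      rintro y (⟨-, h⟩ | ⟨rfl | rfl, -, h⟩)
      · exact absurd (h.symm.trans a) h10
      · rfl
      · exact absurd (d.symm.trans h) h10
    · refine ⟨ρ (ρ w), Or.inr ⟨Or.inr rfl, a, d⟩, ?_⟩
      rintro y (⟨-, h⟩ | ⟨rfl | rfl, -, h⟩)
      · exact absurd (h.symm.trans a) h10
      · exact absurd (c.symm.trans h) h10
      · rfl
    · rw [zero_add, h2] at hw; exact absurd hw.symm h10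
  · refine ⟨_, Or.inl ⟨rfl, a⟩, ?_⟩
    rintro y (⟨h, -⟩ | ⟨-, h, -⟩)
    · exact h
    · exact absurd (a.symm.trans h) h10

lemma matchRel_symm {E : Type*} (ρ : E × Bool → E × Bool)
    (h3 : ∀ w, ρ (ρ (ρ w)) = w) (x : E → ZMod 2) (w w' : E × Bool) (h : matchRel ρ x w w') :
    matchRel ρ x w' w := by
  rcases h with ⟨rfl, h⟩ | ⟨rfl | rfl, h, h'⟩
  · exact Or.inl ⟨by simp, h⟩
  · exact Or.inr ⟨Or.inr (h3 w).symm, h', h⟩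
  · exact Or.inr ⟨Or.inl (h3 w).symm, h', h⟩

/-- If `L` consists of links `(e, false) — (e, true)` and of triangles formed by the orbits of `ρ`,
then its perfect matchings correspond to the sets of links meeting each triangle an odd number of
times, `M` corresponding to the set of links it contains. -/
theorem numPM_eq_ncard {E U : Type*} (L : SimpleGraph U) (Φ : E × Bool ≃ U)
    (ρ : E × Bool → E × Bool) (h3 : ∀ w, ρ (ρ (ρ w)) = w) (h1 : ∀ w, (ρ w).1 ≠ w.1)
    (hL : ∀ w w', L.Adj (Φ w) (Φ w') ↔ w' = (w.1, !w.2) ∨ w' = ρ w ∨ w' = ρ (ρ w)) :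
    numPM L = Set.ncard {x : E → ZMod 2 | ∀ w, x w.1 + x (ρ w).1 + x (ρ (ρ w)).1 = 1} := by
  classical
  let F : L.Subgraph → E → ZMod 2 := fun M e => if M.Adj (Φ (e, false)) (Φ (e, true)) then 1 else 0
  have hF : ∀ (M : L.Subgraph) (w : E × Bool),
      F M w.1 = if M.Adj (Φ w) (Φ (w.1, !w.2)) then 1 else 0 := by
    rintro M ⟨e, _ | _⟩
    · rfl
    · simp only [F, Bool.not_true]
      rw [M.adj_comm]
  have hFodd : ∀ M : L.Subgraph, M.IsPerfectMatching → ∀ w,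
      F M w.1 + F M (ρ w).1 + F M (ρ (ρ w)).1 = 1 := by
    intro M hM w
    have := matching_odd ρ h3 h1 (fun w w' => M.Adj (Φ w) (Φ w')) (fun _ _ h => h.symm)
      (fun w w' h => (hL w w').1 (M.adj_sub h))
      (fun w => by
        obtain ⟨u, hu, hu'⟩ := Subgraph.isPerfectMatching_iff.1 hM (Φ w)
        exact ⟨Φ.symm u, by simpa using hu, fun y hy => by
          rw [← hu' _ hy, Equiv.symm_apply_apply]⟩) w
    simp only [hF]
    have h2 : (1 + 1 + 1 : ZMod 2) = 1 := by decide
    rcases this with ⟨a, c, d⟩ | ⟨a, c, d⟩ | ⟨a, c, d⟩ | ⟨a, c, d⟩ <;> simp [a, c, d, h2]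
  have hrel : ∀ M : L.Subgraph, M.IsPerfectMatching → ∀ w w',
      M.Adj (Φ w) (Φ w') ↔ matchRel ρ (F M) w w' := by
    intro M hM
    have hsub : ∀ w w', M.Adj (Φ w) (Φ w') → matchRel ρ (F M) w w' := by
      intro w w' h
      have z : ∀ u v, M.Adj (Φ u) (Φ v) → v ≠ (u.1, !u.2) → F M u.1 = 0 := by
        intro u v h hne
        rw [hF, if_neg]
        intro h'
        exact hne (Φ.injective (hM.1.eq_of_adj_left h h'))
      by_cases hw : w' = (w.1, !w.2)
      · subst hw
        exact Or.inl ⟨rfl, by rw [hF, if_pos h]⟩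
      · refine Or.inr ⟨((hL w w').1 (M.adj_sub h)).resolve_left hw, z _ _ h hw, z _ _ h.symm ?_⟩
        rintro rfl
        simp at hw
    intro w w'
    refine ⟨hsub w w', fun h => ?_⟩
    -- both relations are functional, so the inclusion of the first in the second is an equality
    obtain ⟨u, hu, -⟩ := Subgraph.isPerfectMatching_iff.1 hM (Φ w)
    obtain ⟨u, rfl⟩ := Φ.surjective u
    rwa [(matchRel_unique ρ h3 h1 _ (hFodd M hM) w).unique h (hsub _ _ hu)]
  refine Set.ncard_congr (fun M _ => F M) (fun M hM => hFodd M hM) ?_ ?_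
  · intro M N hM hN h
    change M.IsPerfectMatching at hM
    change N.IsPerfectMatching at hN
    refine Subgraph.ext (by rw [hM.2.verts_eq_univ, hN.2.verts_eq_univ]) ?_
    ext u v
    obtain ⟨u, rfl⟩ := Φ.surjective u
    obtain ⟨v, rfl⟩ := Φ.surjective v
    rw [hrel M hM, hrel N hN]
    change F M = F N at h
    rw [h]
  · intro x hx
    let M : L.Subgraph :=
      { verts := Set.univ
        Adj := fun u v => matchRel ρ x (Φ.symm u) (Φ.symm v)
        adj_sub := by
          intro u v h
          obtain ⟨u, rfl⟩ := Φ.surjective u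
          obtain ⟨v, rfl⟩ := Φ.surjective v
          rw [hL]
          simp only [Equiv.symm_apply_apply] at h
          rcases h with h | h
          · exact Or.inl h.1
          · exact Or.inr h.1
        edge_vert := fun _ => Set.mem_univ _
        symm := ⟨fun u v h => matchRel_symm ρ h3 x _ _ h⟩ }
    have hadj : ∀ w w', M.Adj (Φ w) (Φ w') ↔ matchRel ρ x w w' := by
      intro w w'
      simp [M]
    refine ⟨M, Subgraph.isPerfectMatching_iff.2 fun u => ?_, ?_⟩
    · obtain ⟨v, hv, hv'⟩ := matchRel_unique ρ h3 h1 x hx (Φ.symm u)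
      exact ⟨Φ v, by simpa [M] using hv, fun y hy => by rw [← hv' _ hy, Equiv.apply_symm_apply]⟩
    · funext e
      simp only [F, hadj, matchRel]
      have n1 : (e, true) ≠ ρ (e, false) := fun h => h1 (e, false) (by rw [← h])
      have n2 : (e, true) ≠ ρ (ρ (e, false)) :=
        fun h => h1 (ρ (ρ (e, false))) (by rw [h3, ← h])
      rcases zmod_cases (x e) with h | h <;> simp [h, n1, n2]

/-! ### Odd edge sets and the incidence matrix -/

section Count

variable {P : Type*} [AddCommGroup P]

/-- The rotation of the three flags at a vertex, when the edge `(p, k)` joins the vertex `p` of the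
part `0` (the end `false`) to the vertex `p - d k` of the part `1` (the end `true`). -/
def rot (d : Fin 3 → P) : (P × Fin 3) × Bool → (P × Fin 3) × Bool
  | ((p, k), false) => ((p, k + 1), false)
  | ((p, k), true) => ((p - d k + d (k + 1), k + 1), true)

lemma rot_rot_rot (d : Fin 3 → P) (w : (P × Fin 3) × Bool) : rot d (rot d (rot d w)) = w := by
  rcases w with ⟨⟨p, k⟩, _ | _⟩
  · simp only [rot, add_assoc]
    simp
  · have : k + 1 + 1 + 1 = k := by revert k; decide
    simp [rot, this]

lemma rot_fst_ne (d : Fin 3 → P) (w : (P × Fin 3) × Bool) : (rot d w).1 ≠ w.1 := by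
  rcases w with ⟨⟨p, k⟩, _ | _⟩ <;> simp [rot]

variable [Fintype P] [DecidableEq P]

/-- The incidence matrix over `𝔽₂` of the bipartite graph in which the edge `(p, k)` joins
`(p, false)` to `(p - d k, true)`. -/
def inc (d : Fin 3 → P) : Matrix (P × Bool) (P × Fin 3) (ZMod 2) :=
  fun v e => match v with
    | (p, false) => if e.1 = p then 1 else 0
    | (p, true) => if e.1 = p + d e.2 then 1 else 0

lemma inc_false (d : Fin 3 → P) (x : P × Fin 3 → ZMod 2) (p : P) :
    (inc d).mulVec x (p, false) = ∑ k, x (p, k) := by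
  simp [Matrix.mulVec, dotProduct, inc, Fintype.sum_prod_type_right]

lemma inc_true (d : Fin 3 → P) (x : P × Fin 3 → ZMod 2) (p : P) :
    (inc d).mulVec x (p, true) = ∑ k, x (p + d k, k) := by
  simp [Matrix.mulVec, dotProduct, inc, Fintype.sum_prod_type_right]

lemma inc_transpose (d : Fin 3 → P) (y : P × Bool → ZMod 2) (p : P) (k : Fin 3) :
    (inc d).transpose.mulVec y (p, k) = y (p, false) + y (p - d k, true) := by
  simp [Matrix.mulVec, dotProduct, inc, Fintype.sum_prod_type_right, ← sub_eq_iff_eq_add,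
    add_comm]

lemma odd_iff (d : Fin 3 → P) (x : P × Fin 3 → ZMod 2) :
    (∀ w, x w.1 + x (rot d w).1 + x (rot d (rot d w)).1 = 1) ↔ (inc d).mulVec x = 1 := by
  have cyc : ∀ (g : Fin 3 → ZMod 2) k, g k + g (k + 1) + g (k + 1 + 1) = ∑ k, g k := by
    intro g k
    rw [Fin.sum_univ_three]
    fin_cases k
    · rfl
    · change g 1 + g 2 + g 0 = _; ring
    · change g 2 + g 0 + g 1 = _; ring
  constructor
  · intro h
    funext ⟨p, s⟩
    rcases s with _ | _
    · rw [inc_false, ← cyc _ 0]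
      exact h ((p, 0), false)
    · rw [inc_true, ← cyc _ 0]
      simpa [rot] using h ((p + d 0, 0), true)
  · rintro h ⟨⟨p, k⟩, _ | _⟩
    · have := congrFun h (p, false)
      rw [inc_false, ← cyc _ k] at this
      exact this
    · have := congrFun h (p - d k, true)
      rw [inc_true, ← cyc _ k] at this
      simpa [rot] using this

/-- The number of edge sets with all degrees odd. The hypothesis `hgen`, that functions invariant
under all `d k` are constant, says that the graph is connected. -/
theorem ncard_odd (d : Fin 3 → P) (h0 : d 0 = 0)
    (hgen : ∀ g : P → ZMod 2, (∀ k p, g (p - d k) = g p) → ∀ p, g p = g 0) :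
    Set.ncard {x : P × Fin 3 → ZMod 2 |
      ∀ w, x w.1 + x (rot d w).1 + x (rot d (rot d w)).1 = 1} = 2 ^ (Fintype.card P + 1) := by
  simp only [odd_iff]
  set A := inc d with hA
  -- the kernel of the transpose is spanned by the constant function `1`
  have hT : Module.finrank (ZMod 2) (LinearMap.ker A.transpose.mulVecLin) = 1 := by
    rw [finrank_eq_one_iff']
    refine ⟨⟨fun _ => 1, ?_⟩, ?_, ?_⟩
    · rw [LinearMap.mem_ker, Matrix.mulVecLin_apply]
      funext ⟨p, k⟩
      rw [hA, inc_transpose]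
      exact CharTwo.add_self_eq_zero 1
    · intro h
      simpa using congrFun (congrArg Subtype.val h) (0, false)
    · rintro ⟨y, hy⟩
      refine ⟨y (0, true), Subtype.ext ?_⟩
      rw [LinearMap.mem_ker, Matrix.mulVecLin_apply] at hy
      have hy' : ∀ p k, y (p, false) = y (p - d k, true) := fun p k => by
        have := congrFun hy (p, k)
        rw [hA, inc_transpose] at this
        exact CharTwo.add_eq_zero.1 this
      have hz : ∀ p, y (p, false) = y (p, true) := fun p => by
        simpa [h0] using hy' p 0
      have hc := hgen (fun p => y (p, true)) fun k p => by
        rw [← hy', hz]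
      funext ⟨p, s⟩
      cases s
      · simp [hz, hc p]
      · simp [hc p]
  have r1 := LinearMap.finrank_range_add_finrank_ker A.mulVecLin
  have r2 := LinearMap.finrank_range_add_finrank_ker A.transpose.mulVecLin
  change A.rank + _ = _ at r1
  change A.transpose.rank + _ = _ at r2
  rw [Matrix.rank_transpose, hT] at r2
  simp only [Module.finrank_fintype_fun_eq_card, Fintype.card_prod, Fintype.card_fin,
    Fintype.card_bool] at r1 r2
  have hk : Module.finrank (ZMod 2) (LinearMap.ker A.mulVecLin) = Fintype.card P + 1 := by omega
  -- the edges of direction `0` form a perfect matching, so all degrees in this set are one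
  let x₀ : P × Fin 3 → ZMod 2 := fun e => if e.2 = 0 then 1 else 0
  have hx₀ : A.mulVec x₀ = 1 := by
    funext ⟨p, s⟩
    cases s
    · rw [hA, inc_false]; simp [x₀]
    · rw [hA, inc_true]; simp [x₀]
  have : {x : P × Fin 3 → ZMod 2 | A.mulVec x = 1} =
      (fun x => x₀ + x) '' (LinearMap.ker A.mulVecLin : Set (P × Fin 3 → ZMod 2)) := by
    ext x
    simp only [Set.mem_ofPred_eq, Set.mem_image, SetLike.mem_coe, LinearMap.mem_ker,
      Matrix.mulVecLin_apply]
    constructor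
    · intro h
      exact ⟨x - x₀, by rw [Matrix.mulVec_sub, h, hx₀, sub_self], by simp⟩
    · rintro ⟨y, hy, rfl⟩
      rw [Matrix.mulVec_add, hy, hx₀, add_zero]
  rw [this, Set.ncard_image_of_injective _ (add_right_injective x₀), ← Nat.card_coe_set_eq]
  have := Module.natCard_eq_pow_finrank (K := ZMod 2) (V := LinearMap.ker A.mulVecLin)
  rw [hk, Nat.card_zmod] at this
  exact this

end Count

/-! ### The flags of the honeycomb lattice -/

section Flags

variable {a b : ℕ}

/-- The neighbours of a vertex `p` of the part `0` are the vertices `p - step a b k` of the part `1`. -/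
def step (a b : ℕ) : Fin 3 → ZMod a × ZMod b := ![(0, 0), (1, 0), (0, 1)]

lemma step_injective (ha : 2 ≤ a) (hb : 2 ≤ b) : Function.Injective (step a b) := by
  have : Fact (1 < a) := ⟨ha⟩
  have : Fact (1 < b) := ⟨hb⟩
  intro k l h
  fin_cases k <;> fin_cases l <;> simp [step] at h ⊢

/-- The vertex of the flag `(e, s)`: the end of the edge `e` in the part `0` if `s = false`, and in
the part `1` if `s = true`. -/
def vtx (w : ((ZMod a × ZMod b) × Fin 3) × Bool) : ZMod a × ZMod b × Fin 2 :=
  match w with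
  | ((p, _), false) => (p.1, p.2, 0)
  | ((p, k), true) => ((p - step a b k).1, (p - step a b k).2, 1)

lemma honeycomb_adj (x y : ZMod a × ZMod b × Fin 2) :
    (honeycomb a b).Adj x y ↔ ∃ e s, x = vtx (e, s) ∧ y = vtx (e, !s) := by
  rw [honeycomb, fromRel_adj]
  constructor
  · rintro ⟨-, h | h⟩
    · obtain ⟨x1, x2, x3⟩ := x
      obtain ⟨y1, y2, y3⟩ := y
      obtain ⟨h0, h1, h⟩ := h
      simp only at h0 h1 h
      subst h0 h1
      rcases h with ⟨rfl, rfl⟩ | ⟨rfl, rfl⟩ | ⟨rfl, rfl⟩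
      · exact ⟨((y1, y2), 0), false, by simp [vtx], by simp [vtx, step]⟩
      · exact ⟨((x1, y2), 1), false, by simp [vtx], by simp [vtx, step]⟩
      · exact ⟨((y1, x2), 2), false, by simp [vtx], by simp [vtx, step]⟩
    · obtain ⟨x1, x2, x3⟩ := x
      obtain ⟨y1, y2, y3⟩ := y
      obtain ⟨h0, h1, h⟩ := h
      simp only at h0 h1 h
      subst h0 h1
      rcases h with ⟨rfl, rfl⟩ | ⟨rfl, rfl⟩ | ⟨rfl, rfl⟩
      · exact ⟨((x1, x2), 0), true, by simp [vtx, step], by simp [vtx]⟩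
      · exact ⟨((y1, x2), 1), true, by simp [vtx, step], by simp [vtx]⟩
      · exact ⟨((x1, y2), 2), true, by simp [vtx, step], by simp [vtx]⟩
  · rintro ⟨⟨p, k⟩, _ | _, rfl, rfl⟩
    · refine ⟨by simp [vtx], Or.inl ?_⟩
      fin_cases k <;> simp [vtx, step]
    · refine ⟨by simp [vtx], Or.inr ?_⟩
      fin_cases k <;> simp [vtx, step]

/-- The edge of the honeycomb with code `e`. -/
def edge (e : (ZMod a × ZMod b) × Fin 3) : (honeycomb a b).edgeSet :=
  ⟨s(vtx (e, false), vtx (e, true)), (honeycomb_adj _ _).2 ⟨e, false, rfl, rfl⟩⟩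

lemma mem_edge (v : ZMod a × ZMod b × Fin 2) (e : (ZMod a × ZMod b) × Fin 3) :
    v ∈ (edge e : Sym2 _) ↔ ∃ s, v = vtx (e, s) := by
  simp [edge]

lemma edge_surjective : Function.Surjective (edge (a := a) (b := b)) := by
  rintro ⟨z, hz⟩
  induction z using Sym2.ind with
  | _ x y =>
    obtain ⟨e, s, rfl, rfl⟩ := (honeycomb_adj _ _).1 hz
    refine ⟨e, Subtype.ext ?_⟩
    cases s
    · rfl
    · exact Sym2.eq_swap

lemma edge_injective (ha : 2 ≤ a) (hb : 2 ≤ b) :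
    Function.Injective (edge (a := a) (b := b)) := by
  rintro ⟨⟨p1, p2⟩, k⟩ ⟨⟨q1, q2⟩, l⟩ h
  have h := congrArg Subtype.val h
  simp only [edge, vtx, Sym2.eq_iff, Prod.mk.injEq, and_true, zero_ne_one, one_ne_zero,
    and_false, or_false] at h
  obtain ⟨⟨rfl, rfl⟩, h1, h2⟩ := h
  have : k = l := step_injective ha hb
    (sub_right_injective (b := ((p1, p2) : ZMod a × ZMod b)) (Prod.ext h1 h2))
  rw [this]

/-- The flags at a given vertex form an orbit of the rotation. -/
lemma vtx_eq_iff (w w' : ((ZMod a × ZMod b) × Fin 3) × Bool) :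
    vtx w = vtx w' ↔ w' = w ∨ w' = rot (step a b) w ∨ w' = rot (step a b) (rot (step a b) w) := by
  have cyc : ∀ k l : Fin 3, l = k ∨ l = k + 1 ∨ l = k + 1 + 1 := by decide
  rcases w with ⟨⟨p, k⟩, _ | _⟩ <;> rcases w' with ⟨⟨q, l⟩, _ | _⟩
  · have := cyc k l
    simp only [vtx, rot, Prod.mk.injEq, and_true]
    rw [← Prod.ext_iff, eq_comm]
    tauto
  · simp [vtx, rot]
  · simp [vtx, rot]
  · have := cyc k l
    have e : vtx ((p, k), true) = vtx ((q, l), true) ↔ q = p - step a b k + step a b l := by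
      simp only [vtx, Prod.mk.injEq, and_true]
      rw [← Prod.ext_iff, eq_comm, sub_eq_iff_eq_add]
    rw [e]
    simp only [rot, Prod.mk.injEq, and_true, add_sub_cancel_right]
    constructor
    · rintro rfl
      rcases this with rfl | rfl | rfl <;> simp
    · rintro (⟨rfl, rfl⟩ | ⟨rfl, rfl⟩ | ⟨rfl, rfl⟩) <;> simp

lemma vtx_ne (e : (ZMod a × ZMod b) × Fin 3) (s t : Bool) (h : vtx (e, s) = vtx (e, t)) :
    s = t := by
  rcases s <;> rcases t <;> simp_all [vtx]

lemma fullSubdivision_adj {V : Type*} (G : SimpleGraph V) (v : V) (e : G.edgeSet) :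
    (fullSubdivision G).Adj (Sum.inl v) (Sum.inr e) ↔ v ∈ (e : Sym2 V) := by
  simp [fullSubdivision]

lemma fullSubdivision_edge {V : Type*} (G : SimpleGraph V) (z : (fullSubdivision G).edgeSet) :
    ∃ v, ∃ e : G.edgeSet, v ∈ (e : Sym2 V) ∧ (z : Sym2 _) = s(Sum.inl v, Sum.inr e) := by
  obtain ⟨z, hz⟩ := z
  induction z using Sym2.ind with
  | _ x y =>
    rw [mem_edgeSet, fullSubdivision, fromRel_adj] at hz
    obtain ⟨-, ⟨v, e, rfl, rfl, h⟩ | ⟨v, e, rfl, rfl, h⟩⟩ := hz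
    · exact ⟨v, e, h, rfl⟩
    · exact ⟨v, e, h, Sym2.eq_swap⟩

/-- The flag `w` as an edge of `S(H)`, i.e. as a vertex of the line graph. -/
def flag (w : ((ZMod a × ZMod b) × Fin 3) × Bool) : (fullSubdivision (honeycomb a b)).edgeSet :=
  ⟨s(Sum.inl (vtx w), Sum.inr (edge w.1)),
    (fullSubdivision_adj _ _ _).2 ((mem_edge _ _).2 ⟨w.2, rfl⟩)⟩

lemma flag_bijective (ha : 2 ≤ a) (hb : 2 ≤ b) :
    Function.Bijective (flag (a := a) (b := b)) := by
  constructor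
  · rintro ⟨e, s⟩ ⟨f, t⟩ h
    have h := congrArg Subtype.val h
    simp only [flag, Sym2.eq_iff, Sum.inl.injEq, Sum.inr.injEq, reduceCtorEq, and_false,
      or_false] at h
    obtain ⟨h1, h2⟩ := h
    obtain rfl := edge_injective ha hb h2
    rw [vtx_ne _ _ _ h1]
  · intro z
    obtain ⟨v, e, hv, hz⟩ := fullSubdivision_edge _ z
    obtain ⟨e, rfl⟩ := edge_surjective e
    obtain ⟨s, rfl⟩ := (mem_edge _ _).1 hv
    exact ⟨(e, s), Subtype.ext hz.symm⟩

lemma flag_adj (ha : 2 ≤ a) (hb : 2 ≤ b) (w w' : ((ZMod a × ZMod b) × Fin 3) × Bool) :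
    (fullSubdivision (honeycomb a b)).lineGraph.Adj (flag w) (flag w') ↔
      w' = (w.1, !w.2) ∨ w' = rot (step a b) w ∨ w' = rot (step a b) (rot (step a b) w) := by
  have hne := rot_fst_ne (step a b)
  have share : (∃ u, u ∈ (flag w).1 ∧ u ∈ (flag w').1) ↔
      vtx w = vtx w' ∨ w.1 = w'.1 := by
    rw [← (edge_injective ha hb).eq_iff]
    simp [flag]
  rw [lineGraph_adj_iff_exists, (flag_bijective ha hb).1.ne_iff, share, vtx_eq_iff]
  constructor
  · rintro ⟨hww, (h | h) | h⟩
    · exact absurd h.symm hww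
    · exact Or.inr h
    · left
      obtain ⟨e, s⟩ := w
      obtain ⟨f, t⟩ := w'
      obtain rfl : e = f := h
      cases s <;> cases t <;> simp_all
  · rintro (rfl | h)
    · exact ⟨fun h => by simpa using congrArg Prod.snd h, Or.inr rfl⟩
    · refine ⟨?_, Or.inl (Or.inr h)⟩
      rintro rfl
      rcases h with h | h
      · exact hne w (by rw [← h])
      · have := hne (rot (step a b) (rot (step a b) w))
        rw [rot_rot_rot, ← h] at this
        exact this rfl

end Flags

/-- Connectedness of the honeycomb: the `step a b k` generate the torus. -/
lemma step_generates (a b : ℕ) [NeZero a] [NeZero b] (g : ZMod a × ZMod b → ZMod 2)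
    (h : ∀ k p, g (p - step a b k) = g p) (p : ZMod a × ZMod b) : g p = g 0 := by
  have h1 : ∀ n : ℕ, ∀ j, g ((n : ZMod a), j) = g (0, j) := by
    intro n j
    induction n with
    | zero => simp
    | succ n ih => rw [← ih, ← h 1]; simp [step]
  have h2 : ∀ n : ℕ, g (0, (n : ZMod b)) = g (0, 0) := by
    intro n
    induction n with
    | zero => simp
    | succ n ih => rw [← ih, ← h 2]; simp [step]
  obtain ⟨i, j⟩ := p
  obtain ⟨i, rfl⟩ := ZMod.natCast_zmod_surjective i
  obtain ⟨j, rfl⟩ := ZMod.natCast_zmod_surjective j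
  rw [h1, h2]
  rfl

end Honeycomb

/-- The number of perfect matchings of the `3.12.12` lattice with toroidal boundary
condition — the line graph of the full subdivision of the honeycomb lattice `H(a,b)` on the
torus — equals `2 ^ (a*b + 1)`. -/
theorem numPM_lineGraph_fullSubdivision_honeycomb
    (a b : ℕ) (ha : 2 ≤ a) (hb : 2 ≤ b) :
    numPM (fullSubdivision (honeycomb a b)).lineGraph = 2 ^ (a * b + 1) := by
  have : NeZero a := ⟨by omega⟩
  have : NeZero b := ⟨by omega⟩
  rw [Honeycomb.numPM_eq_ncard _ (Equiv.ofBijective _ (Honeycomb.flag_bijective ha hb))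
      (Honeycomb.rot (Honeycomb.step a b)) (Honeycomb.rot_rot_rot _) (Honeycomb.rot_fst_ne _)
      (Honeycomb.flag_adj ha hb),
    Honeycomb.ncard_odd _ rfl (Honeycomb.step_generates a b)]
  simp [ZMod.card]
end

section
/- Let n ≥ 2 and m ≥ 1 be integers and let H(n,2m) be the honeycomb (hexagonal) lattice on the torus with 4mn vertices. Then the number of perfect matchings of the line graph L(H(n,2m)) — which is the Kagomé lattice K^T(n,m) with toroidal boundary condition, a graph with 6mn vertices — equals 2^(2mn + 1). -/
/-!
A perfect matching of a line graph pairs the edges of the underlying graph into paths of length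
two. Assign each edge of the honeycomb to the vertex it shares with its partner: since the graph is
simple this vertex is unique, and since the graph is cubic every vertex receives zero or two edges.
Conversely an assignment of edges to endpoints in which every vertex receives an even number of
edges determines the pairing (`bijOn_assignSubgraph`). The perfect matchings are thus the solutions
of a linear system over `ZMod 2` with one unknown per edge and one equation per vertex.

Eliminating one unknown at each vertex of sublattice `0` leaves two functions `p`, `q` on the torus
`ZMod a × ZMod b` with `p v + p (v + (1,0)) + q v + q (v + (0,1)) = 1`. The image of the linear map
on the left consists of the functions with total sum zero (`range_shiftSum`), because the torus is
generated by `(1,0)` and `(0,1)`; so its kernel has dimension `2ab - (ab - 1) = ab + 1`. For even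
`b` the parity of the second coordinate gives a particular solution `q`, and the solutions form a
coset of the kernel.
-/

open SimpleGraph

/-! ### Edges of the honeycomb -/

/-- The three steps `0`, `(1,0)`, `(0,1)`: the edges of the honeycomb at `(v,0)` lead to
`(v - step k, 1)`. -/
def step (a b : ℕ) : Fin 3 → ZMod a × ZMod b := ![0, (1, 0), (0, 1)]

lemma step_injective {a b : ℕ} (ha : 2 ≤ a) (hb : 2 ≤ b) :
    Function.Injective (step a b) := by
  have : Fact (1 < a) := ⟨ha⟩
  have : Fact (1 < b) := ⟨hb⟩
  intro k l h
  fin_cases k <;> fin_cases l <;> simp [step, Prod.ext_iff] at h ⊢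

/-- The edge of the honeycomb in direction `k` at the vertex `(v,0)`. -/
def hexEdge (a b : ℕ) (e : (ZMod a × ZMod b) × Fin 3) : (honeycomb a b).edgeSet :=
  ⟨s((e.1.1, e.1.2, 0), ((e.1 - step a b e.2).1, (e.1 - step a b e.2).2, 1)), by
    obtain ⟨⟨i, j⟩, k⟩ := e
    rw [SimpleGraph.mem_edgeSet, honeycomb, SimpleGraph.fromRel_adj]
    fin_cases k <;> simp [step]⟩

lemma hexEdge_bijective {a b : ℕ} (ha : 2 ≤ a) (hb : 2 ≤ b) :
    Function.Bijective (hexEdge a b) := by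
  constructor
  · rintro ⟨v, k⟩ ⟨w, l⟩ h
    simp only [hexEdge, Subtype.mk.injEq, Sym2.eq_iff, Prod.mk.injEq] at h
    rcases h with ⟨⟨h1, h2, -⟩, h3, h4, -⟩ | ⟨⟨-, -, h⟩, -⟩
    · have hv : v = w := Prod.ext h1 h2
      subst hv
      have : step a b k = step a b l := sub_right_injective (Prod.ext h3 h4)
      rw [step_injective ha hb this]
    · simp at h
  · -- an edge joins the two sublattices, so up to symmetry it starts at some `(i,j,0)`
    have key : ∀ x y : ZMod a × ZMod b × Fin 2, x.2.2 = 0 ∧ y.2.2 = 1 ∧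
        ((y.1 = x.1 ∧ y.2.1 = x.2.1) ∨ (y.1 = x.1 - 1 ∧ y.2.1 = x.2.1) ∨
         (y.1 = x.1 ∧ y.2.1 = x.2.1 - 1)) →
        ∃ e, (hexEdge a b e).1 = s(x, y) := by
      rintro ⟨i, j, s⟩ ⟨i', j', t⟩ ⟨rfl, rfl, ⟨h1, h2⟩ | ⟨h1, h2⟩ | ⟨h1, h2⟩⟩
      · exact ⟨((i, j), 0), by simp_all [hexEdge, step]⟩
      · exact ⟨((i, j), 1), by simp_all [hexEdge, step]⟩
      · exact ⟨((i, j), 2), by simp_all [hexEdge, step]⟩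
    rintro ⟨e, he⟩
    induction e using Sym2.ind with
    | _ x y =>
      rw [SimpleGraph.mem_edgeSet, honeycomb, SimpleGraph.fromRel_adj] at he
      rcases he.2 with h | h
      · obtain ⟨e, h⟩ := key _ _ h
        exact ⟨e, Subtype.ext h⟩
      · obtain ⟨e, h⟩ := key _ _ h
        exact ⟨e, Subtype.ext (h.trans Sym2.eq_swap)⟩

lemma hexEdge_adj {a b : ℕ} (ha : 2 ≤ a) (hb : 2 ≤ b) (e f : (ZMod a × ZMod b) × Fin 3) :
    (honeycomb a b).lineGraph.Adj (hexEdge a b e) (hexEdge a b f) ↔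
      e ≠ f ∧ (e.1 = f.1 ∨ e.1 - step a b e.2 = f.1 - step a b f.2) := by
  rw [SimpleGraph.lineGraph_adj_iff_exists, (hexEdge_bijective ha hb).1.ne_iff]
  refine and_congr_right fun _ => ?_
  simp only [hexEdge, Sym2.mem_iff]
  constructor
  · rintro ⟨x, rfl | rfl, h | h⟩ <;> simp_all [Prod.ext_iff]
  · rintro (h | h)
    · exact ⟨_, Or.inl rfl, Or.inl (by rw [h])⟩
    · exact ⟨_, Or.inr rfl, Or.inr (by rw [h])⟩

/-! ### Matchings as assignments of edges to endpoints -/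

/-- Two edges are assigned to the same vertex by `x`, where `x e = 1` assigns `e` to its endpoint
in sublattice `0` and `x e = 0` assigns it to its endpoint in sublattice `1`. -/
def SameEnd {a b : ℕ} (x : (ZMod a × ZMod b) × Fin 3 → ZMod 2)
    (e f : (ZMod a × ZMod b) × Fin 3) : Prop :=
  (e.1 = f.1 ∧ x e = 1 ∧ x f = 1) ∨
    (e.1 - step a b e.2 = f.1 - step a b f.2 ∧ x e = 0 ∧ x f = 0)

/-- Assignments of edges to endpoints giving each vertex an even number of edges. The second
equation is inhomogeneous because the edges at a vertex of sublattice `1` that are assigned to it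
are those with `x = 0`. -/
def evenAssign (a b : ℕ) : Set ((ZMod a × ZMod b) × Fin 3 → ZMod 2) :=
  {x | ∀ v, x (v, 0) + x (v, 1) + x (v, 2) = 0 ∧
    x (v, 0) + x (v + (1, 0), 1) + x (v + (0, 1), 2) = 1}

/-- Among three edges at a vertex, an even number is assigned to it iff each assigned edge has a
unique assigned companion. Edge `k` counts as assigned when `y k = c`; the number of such `k` is
even exactly when `∑ k, (1 + c + y k) = 0` in `ZMod 2`. -/
lemma even_iff_existsUnique (c : ZMod 2) : ∀ y : Fin 3 → ZMod 2,
    y 0 + y 1 + y 2 = 1 + c ↔ ∀ k, y k = c → ∃! l, k ≠ l ∧ y l = c := by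
  revert c
  unfold ExistsUnique
  decide

lemma existsUnique_iff_of_injective {α β : Type*} {g : α → β} (hg : Function.Injective g)
    {p : β → Prop} {q : α → Prop} (h : ∀ f, p f ↔ ∃ l, f = g l ∧ q l) :
    (∃! f, p f) ↔ ∃! l, q l := by
  constructor
  · rintro ⟨f, hf, hu⟩
    obtain ⟨l, rfl, hl⟩ := (h f).1 hf
    exact ⟨l, hl, fun l' hl' => hg (hu _ ((h _).2 ⟨l', rfl, hl'⟩))⟩
  · rintro ⟨l, hl, hu⟩
    refine ⟨g l, (h _).2 ⟨l, rfl, hl⟩, fun f hf => ?_⟩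
    obtain ⟨l', rfl, hl'⟩ := (h f).1 hf
    rw [hu l' hl']

lemma existsUnique_sameEnd_iff {a b : ℕ} (x : (ZMod a × ZMod b) × Fin 3 → ZMod 2) :
    (∀ e, ∃! f, e ≠ f ∧ SameEnd x e f) ↔ x ∈ evenAssign a b := by
  have h1 : ∀ v, (x (v, 0) + x (v, 1) + x (v, 2) = 0 ↔ _) := fun v =>
    even_iff_existsUnique 1 (fun k => x (v, k))
  have h2 : ∀ v, (x (v, 0) + x (v + (1, 0), 1) + x (v + (0, 1), 2) = 1 ↔
      ∀ k, x (v + step a b k, k) = 0 → ∃! l, k ≠ l ∧ x (v + step a b l, l) = 0) := fun v => by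
    rw [← even_iff_existsUnique 0 (fun k => x (v + step a b k, k))]
    simp [step]
  have e1 : ∀ v k, x (v, k) = 1 → ((∃! f, (v, k) ≠ f ∧ SameEnd x (v, k) f) ↔
      ∃! l, k ≠ l ∧ x (v, l) = 1) := fun v k hx => by
    refine existsUnique_iff_of_injective (g := fun l => (v, l))
      (fun l l' h => (Prod.mk.inj h).2) ?_
    rintro ⟨w, l⟩
    simp only [SameEnd, hx, ne_eq, Prod.mk.injEq, true_and, one_ne_zero, false_and, and_false,
      or_false]
    constructor
    · rintro ⟨h, rfl, h'⟩
      exact ⟨l, ⟨rfl, rfl⟩, fun hl => h ⟨rfl, hl⟩, h'⟩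
    · rintro ⟨l, ⟨rfl, rfl⟩, h, h'⟩
      exact ⟨fun hl => h hl.2, rfl, h'⟩
  have e2 : ∀ v k, x (v + step a b k, k) = 0 →
      ((∃! f, (v + step a b k, k) ≠ f ∧ SameEnd x (v + step a b k, k) f) ↔
      ∃! l, k ≠ l ∧ x (v + step a b l, l) = 0) := fun v k hx => by
    refine existsUnique_iff_of_injective (g := fun l => (v + step a b l, l))
      (fun l l' h => (Prod.mk.inj h).2) ?_
    rintro ⟨w, l⟩
    simp only [SameEnd, hx, ne_eq, Prod.mk.injEq, true_and, zero_ne_one, false_and, and_false,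
      false_or, add_sub_cancel_right]
    constructor
    · rintro ⟨h, rfl, h'⟩
      refine ⟨l, ⟨by simp, rfl⟩, ?_, by simpa using h'⟩
      rintro rfl
      exact h ⟨by simp, rfl⟩
    · rintro ⟨l, ⟨rfl, rfl⟩, h, h'⟩
      exact ⟨fun hl => h hl.2, by simp, h'⟩
  simp only [evenAssign, Set.mem_ofPred_eq, h1, h2]
  constructor
  · exact fun h v => ⟨fun k hk => (e1 v k hk).1 (h _), fun k hk => (e2 v k hk).1 (h _)⟩
  · rintro h ⟨v, k⟩
    have h01 : ∀ c : ZMod 2, c = 1 ∨ c = 0 := by decide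
    rcases h01 (x (v, k)) with hk | hk
    · exact (e1 v k hk).2 ((h v).1 k hk)
    · have := e2 (v - step a b k) k (by simpa using hk)
      rw [sub_add_cancel] at this
      exact this.2 ((h _).2 k (by simpa using hk))

lemma SameEnd.symm {a b : ℕ} {x : (ZMod a × ZMod b) × Fin 3 → ZMod 2}
    {e f : (ZMod a × ZMod b) × Fin 3} (h : SameEnd x e f) : SameEnd x f e := by
  rcases h with ⟨h1, h2, h3⟩ | ⟨h1, h2, h3⟩
  · exact Or.inl ⟨h1.symm, h3, h2⟩
  · exact Or.inr ⟨h1.symm, h3, h2⟩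

/-- The parametrization of the vertices of the line graph by position and direction. -/
noncomputable def hexEquiv {a b : ℕ} (ha : 2 ≤ a) (hb : 2 ≤ b) :
    (ZMod a × ZMod b) × Fin 3 ≃ (honeycomb a b).edgeSet :=
  Equiv.ofBijective (hexEdge a b) (hexEdge_bijective ha hb)

lemma hexEquiv_adj {a b : ℕ} (ha : 2 ≤ a) (hb : 2 ≤ b) (e f : (ZMod a × ZMod b) × Fin 3) :
    (honeycomb a b).lineGraph.Adj (hexEquiv ha hb e) (hexEquiv ha hb f) ↔
      e ≠ f ∧ (e.1 = f.1 ∨ e.1 - step a b e.2 = f.1 - step a b f.2) :=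
  hexEdge_adj ha hb e f

/-- The spanning subgraph of the line graph joining the edges assigned to a common vertex. -/
def assignSubgraph {a b : ℕ} (ha : 2 ≤ a) (hb : 2 ≤ b)
    (x : (ZMod a × ZMod b) × Fin 3 → ZMod 2) : (honeycomb a b).lineGraph.Subgraph where
  verts := Set.univ
  Adj w w' := (hexEquiv ha hb).symm w ≠ (hexEquiv ha hb).symm w' ∧
    SameEnd x ((hexEquiv ha hb).symm w) ((hexEquiv ha hb).symm w')
  adj_sub {w w'} h := by
    have := (hexEquiv_adj ha hb ((hexEquiv ha hb).symm w) ((hexEquiv ha hb).symm w')).2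
      ⟨h.1, h.2.imp And.left And.left⟩
    simpa using this
  edge_vert _ := Set.mem_univ _
  symm := ⟨fun _ _ h => ⟨h.1.symm, h.2.symm⟩⟩

lemma assignSubgraph_adj {a b : ℕ} (ha : 2 ≤ a) (hb : 2 ≤ b)
    (x : (ZMod a × ZMod b) × Fin 3 → ZMod 2) (e f : (ZMod a × ZMod b) × Fin 3) :
    (assignSubgraph ha hb x).Adj (hexEquiv ha hb e) (hexEquiv ha hb f) ↔
      e ≠ f ∧ SameEnd x e f := by
  simp [assignSubgraph]

lemma isPerfectMatching_iff_hexEquiv {a b : ℕ} (ha : 2 ≤ a) (hb : 2 ≤ b)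
    (M : (honeycomb a b).lineGraph.Subgraph) :
    M.IsPerfectMatching ↔ ∀ e, ∃! f, M.Adj (hexEquiv ha hb e) (hexEquiv ha hb f) := by
  rw [SimpleGraph.Subgraph.isPerfectMatching_iff, ← (hexEquiv ha hb).forall_congr_right]
  exact forall_congr' fun e => ((hexEquiv ha hb).existsUnique_congr_right).symm

/-- Two distinct edges of the honeycomb share at most one endpoint. -/
lemma not_both_ends {a b : ℕ} (ha : 2 ≤ a) (hb : 2 ≤ b) {e f : (ZMod a × ZMod b) × Fin 3}
    (hne : e ≠ f) (h1 : e.1 = f.1) : e.1 - step a b e.2 ≠ f.1 - step a b f.2 := by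
  intro h2
  rw [h1] at h2
  exact hne (Prod.ext h1 (step_injective ha hb (sub_right_injective h2)))

lemma bijOn_assignSubgraph {a b : ℕ} (ha : 2 ≤ a) (hb : 2 ≤ b) :
    Set.BijOn (assignSubgraph ha hb) (evenAssign a b) {M | M.IsPerfectMatching} := by
  have h01 : ∀ c : ZMod 2, c = 1 ∨ c = 0 := by decide
  refine ⟨fun x hx => ?_, fun x hx y hy hxy => ?_, fun M hM => ?_⟩
  · rw [Set.mem_ofPred_eq, isPerfectMatching_iff_hexEquiv ha hb]
    simpa only [assignSubgraph_adj] using (existsUnique_sameEnd_iff x).2 hx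
  · funext e
    obtain ⟨f, ⟨hne, hf⟩, -⟩ := (existsUnique_sameEnd_iff x).2 hx e
    have hf' := (assignSubgraph_adj ha hb x e f).2 ⟨hne, hf⟩
    rw [hxy, assignSubgraph_adj] at hf'
    -- `e` and `f` share one endpoint only, and both `x` and `y` send `e` to it
    rcases hf with ⟨h1, h2, -⟩ | ⟨h1, h2, -⟩ <;> rcases hf'.2 with ⟨h3, h4, -⟩ | ⟨h3, h4, -⟩
    · rw [h2, h4]
    · exact (not_both_ends ha hb hne h1 h3).elim
    · exact (not_both_ends ha hb hne h3 h1).elim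
    · rw [h2, h4]
  · classical
    have hM' := (isPerfectMatching_iff_hexEquiv ha hb M).1 hM
    choose p hp hu using hM'
    have hadj : ∀ e, e ≠ p e ∧ (e.1 = (p e).1 ∨
        e.1 - step a b e.2 = (p e).1 - step a b (p e).2) :=
      fun e => (hexEquiv_adj ha hb _ _).1 (hp e).adj_sub
    have hpp : ∀ e, p (p e) = e := fun e => (hu _ _ (hp e).symm).symm
    -- an edge is sent to the vertex it shares with its partner
    set x : (ZMod a × ZMod b) × Fin 3 → ZMod 2 := fun e => if e.1 = (p e).1 then 1 else 0 with hx
    have hx1 : ∀ e, x e = 1 → e.1 = (p e).1 := fun e h => by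
      by_contra h'
      simp [hx, h'] at h
    have hx0 : ∀ e, x e = 0 → e.1 - step a b e.2 = (p e).1 - step a b (p e).2 := fun e h => by
      refine (hadj e).2.resolve_left fun h' => ?_
      simp [hx, h'] at h
    have hxp : ∀ e, SameEnd x e (p e) := fun e => by
      by_cases h : e.1 = (p e).1
      · exact Or.inl ⟨h, by simp [hx, h], by simp [hx, hpp, h]⟩
      · exact Or.inr ⟨(hadj e).2.resolve_left h, by simp [hx, h], by simp [hx, hpp, Ne.symm h]⟩
    -- two partnered pairs at the same vertex coincide, since four edges do not fit there
    have four : ∀ k l k' l' : Fin 3, k ≠ l → k ≠ k' → l ≠ l' → k' ≠ l' → k' ≠ l → k = l' := by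
      decide
    have key : ∀ e f, e ≠ f → SameEnd x e f → f = p e := by
      intro e f hne hs
      by_contra hfe
      have hef : e ≠ p f := fun h => hfe (by rw [h, hpp])
      have hpef : p e ≠ p f := fun h => hne (by rw [← hpp e, h, hpp])
      rcases hs with ⟨h1, h2, h3⟩ | ⟨h1, h2, h3⟩
      · have he := hx1 e h2
        have hf := hx1 f h3
        have inj : ∀ {g h : (ZMod a × ZMod b) × Fin 3}, g.1 = h.1 → g ≠ h → g.2 ≠ h.2 :=
          fun h1 hn h2 => hn (Prod.ext h1 h2)
        exact inj (h1.trans hf) hef (four e.2 f.2 (p e).2 (p f).2 (inj h1 hne)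
          (inj he (hadj e).1) (inj hf (hadj f).1) (inj (he.symm.trans (h1.trans hf)) hpef)
          (inj (he.symm.trans h1) (Ne.symm hfe)))
      · have he := hx0 e h2
        have hf := hx0 f h3
        have inj : ∀ {g h : (ZMod a × ZMod b) × Fin 3},
            g.1 - step a b g.2 = h.1 - step a b h.2 → g ≠ h → g.2 ≠ h.2 :=
          fun h1 hn h2 => hn (Prod.ext (by rw [h2] at h1; exact sub_left_injective h1) h2)
        exact inj (h1.trans hf) hef (four e.2 f.2 (p e).2 (p f).2 (inj h1 hne)
          (inj he (hadj e).1) (inj hf (hadj f).1) (inj (he.symm.trans (h1.trans hf)) hpef)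
          (inj (he.symm.trans h1) (Ne.symm hfe)))
    have hiff : ∀ e f, (e ≠ f ∧ SameEnd x e f) ↔ f = p e := fun e f =>
      ⟨fun h => key e f h.1 h.2, by rintro rfl; exact ⟨(hadj e).1, hxp e⟩⟩
    refine ⟨x, (existsUnique_sameEnd_iff x).1 fun e => ?_, ?_⟩
    · simp only [hiff, existsUnique_eq]
    · apply SimpleGraph.Subgraph.ext
      · exact (SimpleGraph.Subgraph.isSpanning_iff.1 hM.2).symm
      · funext w w'
        obtain ⟨e, rfl⟩ := (hexEquiv ha hb).surjective w
        obtain ⟨f, rfl⟩ := (hexEquiv ha hb).surjective w'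
        rw [eq_iff_iff, assignSubgraph_adj, hiff]
        exact ⟨by rintro rfl; exact hp e, hu e f⟩

/-! ### Solving the linear system -/

/-- The left-hand side of the equations at sublattice `1`, once the variables `x (·, 0)` have been
eliminated by means of those at sublattice `0`. -/
def shiftSum (a b : ℕ) : ((ZMod a × ZMod b → ZMod 2) × (ZMod a × ZMod b → ZMod 2)) →ₗ[ZMod 2]
    (ZMod a × ZMod b → ZMod 2) where
  toFun z v := z.1 v + z.1 (v + (1, 0)) + (z.2 v + z.2 (v + (0, 1)))
  map_add' z z' := by funext v; simp only [Prod.fst_add, Prod.snd_add, Pi.add_apply]; ring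
  map_smul' c z := by
    funext v
    simp only [Prod.smul_fst, Prod.smul_snd, Pi.smul_apply, smul_eq_mul, RingHom.id_apply]; ring

lemma shiftSum_apply {a b : ℕ} (z : (ZMod a × ZMod b → ZMod 2) × (ZMod a × ZMod b → ZMod 2))
    (v : ZMod a × ZMod b) :
    shiftSum a b z v = z.1 v + z.1 (v + (1, 0)) + (z.2 v + z.2 (v + (0, 1))) := rfl

lemma ncard_evenAssign {a b : ℕ} :
    (evenAssign a b).ncard = {z | shiftSum a b z = 1}.ncard := by
  have two : ∀ c d : ZMod 2, c + d + c + d = 0 := by decide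
  have two' : ∀ c d e : ZMod 2, c + d + e = 0 → c = d + e := by decide
  refine (Set.ncard_congr (fun z _ e => ![z.1 e.1 + z.2 e.1, z.1 e.1, z.2 e.1] e.2)
    ?_ ?_ ?_).symm
  · intro z hz v
    have := congrFun hz v
    simp only [shiftSum_apply, Pi.one_apply] at this
    simp only [Matrix.cons_val]
    exact ⟨two _ _, by rw [← this]; ring⟩
  · intro z z' _ _ h
    exact Prod.ext (funext fun v => congrFun h (v, 1)) (funext fun v => congrFun h (v, 2))
  · intro x hx
    refine ⟨(fun v => x (v, 1), fun v => x (v, 2)), ?_, ?_⟩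
    · funext v
      obtain ⟨h1, h2⟩ := hx v
      rw [shiftSum_apply, Pi.one_apply, ← h2, two' _ _ _ h1]
      ring
    · funext ⟨v, k⟩
      fin_cases k
      · exact (two' _ _ _ (hx v).1).symm
      · rfl
      · rfl

/-- Up to the image of `shiftSum`, all point masses on the torus agree. -/
lemma single_add_single_mem_range {a b : ℕ} [NeZero a] [NeZero b] (v : ZMod a × ZMod b) :
    (Pi.single v 1 + Pi.single 0 1 : ZMod a × ZMod b → ZMod 2) ∈
      LinearMap.range (shiftSum a b) := by
  have two : ∀ f : ZMod a × ZMod b → ZMod 2, f + f = 0 := fun f => CharTwo.add_self_eq_zero f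
  have hsh : ∀ v w u : ZMod a × ZMod b,
      (Pi.single (v + w) 1 : ZMod a × ZMod b → ZMod 2) (u + w) =
      (Pi.single v 1 : ZMod a × ZMod b → ZMod 2) u := fun v w u => by
    simp [Pi.single_apply]
  have hstep : ∀ v w : ZMod a × ZMod b, w = (1, 0) ∨ w = (0, 1) →
      (Pi.single (v + w) 1 + Pi.single v 1 : ZMod a × ZMod b → ZMod 2) ∈
        LinearMap.range (shiftSum a b) := by
    rintro v w (rfl | rfl)
    · refine ⟨(Pi.single (v + (1, 0)) 1, 0), funext fun u => ?_⟩
      simp [shiftSum_apply, hsh]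
    · refine ⟨(0, Pi.single (v + (0, 1)) 1), funext fun u => ?_⟩
      simp [shiftSum_apply, hsh]
  have hadd : ∀ v w : ZMod a × ZMod b, w = (1, 0) ∨ w = (0, 1) →
      (Pi.single v 1 + Pi.single 0 1 : ZMod a × ZMod b → ZMod 2) ∈
        LinearMap.range (shiftSum a b) →
      (Pi.single (v + w) 1 + Pi.single 0 1 : ZMod a × ZMod b → ZMod 2) ∈
        LinearMap.range (shiftSum a b) := by
    intro v w hw h
    have := add_mem (hstep v w hw) h
    rwa [add_assoc, ← add_assoc (Pi.single v 1), two, zero_add] at this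
  have hnat : ∀ i j : ℕ, (Pi.single ((i : ZMod a), (j : ZMod b)) 1 + Pi.single 0 1 :
      ZMod a × ZMod b → ZMod 2) ∈ LinearMap.range (shiftSum a b) := by
    intro i j
    induction i with
    | zero =>
      induction j with
      | zero => simp [← Prod.zero_eq_mk, two]
      | succ j ih => simpa using hadd _ _ (Or.inr rfl) ih
    | succ i ih => simpa using hadd _ _ (Or.inl rfl) ih
  simpa using hnat v.1.val v.2.val

/-- The functional adding up all values of a function on the torus. -/
def total (a b : ℕ) [NeZero a] [NeZero b] : (ZMod a × ZMod b → ZMod 2) →ₗ[ZMod 2] ZMod 2 where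
  toFun f := ∑ v, f v
  map_add' f g := Finset.sum_add_distrib
  map_smul' c f := by simp [Finset.mul_sum]

lemma range_shiftSum {a b : ℕ} [NeZero a] [NeZero b] :
    LinearMap.range (shiftSum a b) = LinearMap.ker (total a b) := by
  apply le_antisymm
  · rintro _ ⟨z, rfl⟩
    rw [LinearMap.mem_ker]
    change ∑ v, (z.1 v + z.1 (v + (1, 0)) + (z.2 v + z.2 (v + (0, 1)))) = 0
    simp only [Finset.sum_add_distrib]
    rw [Fintype.sum_equiv (Equiv.addRight ((1, 0) : ZMod a × ZMod b))
        (fun v => z.1 (v + (1, 0))) z.1 (fun _ => rfl),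
      Fintype.sum_equiv (Equiv.addRight ((0, 1) : ZMod a × ZMod b))
        (fun v => z.2 (v + (0, 1))) z.2 (fun _ => rfl)]
    simp [CharTwo.add_self_eq_zero]
  · intro f hf
    have hf' : ∑ v, f v = 0 := hf
    have : f = ∑ v, f v • (Pi.single v 1 + Pi.single 0 1 : ZMod a × ZMod b → ZMod 2) := by
      simp only [smul_add, Finset.sum_add_distrib, ← Finset.sum_smul, hf', zero_smul, add_zero]
      funext u
      simp [Finset.sum_apply, Pi.single_apply]
    rw [this]
    exact sum_mem fun v _ => Submodule.smul_mem _ _ (single_add_single_mem_range v)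

lemma finrank_ker_shiftSum {a b : ℕ} [NeZero a] [NeZero b] :
    Module.finrank (ZMod 2) (LinearMap.ker (shiftSum a b)) = a * b + 1 := by
  have h1 := LinearMap.finrank_range_add_finrank_ker (shiftSum a b)
  have h2 := LinearMap.finrank_range_add_finrank_ker (total a b)
  have hs : LinearMap.range (total a b) = ⊤ := by
    rw [LinearMap.range_eq_top]
    intro c
    refine ⟨Pi.single 0 c, ?_⟩
    change ∑ v, (Pi.single 0 c : ZMod a × ZMod b → ZMod 2) v = c
    simp
  rw [range_shiftSum] at h1
  rw [hs, finrank_top] at h2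
  simp only [Module.finrank_prod, Module.finrank_pi, Module.finrank_self, Fintype.card_prod,
    ZMod.card] at h1 h2
  omega

lemma ncard_shiftSum_eq_one {a m : ℕ} [NeZero a] [NeZero (2 * m)] :
    {z | shiftSum a (2 * m) z = 1}.ncard = 2 ^ (a * (2 * m) + 1) := by
  -- a particular solution: the parity of the second coordinate, well defined since `2 ∣ 2 * m`
  set z₀ : (ZMod a × ZMod (2 * m) → ZMod 2) × (ZMod a × ZMod (2 * m) → ZMod 2) :=
    (0, fun v => ZMod.castHom (Dvd.intro m rfl) (ZMod 2) v.2) with hz₀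
  have h0 : shiftSum a (2 * m) z₀ = 1 := by
    funext v
    simp only [shiftSum_apply, hz₀, Prod.snd_add, map_add, map_one, Pi.zero_apply, Pi.one_apply]
    rw [← add_assoc, CharTwo.add_self_eq_zero, zero_add, ← add_assoc, CharTwo.add_self_eq_zero,
      zero_add]
  have himg : {z | shiftSum a (2 * m) z = 1} =
      (fun z => z + z₀) '' (LinearMap.ker (shiftSum a (2 * m)) : Set _) := by
    ext z
    constructor
    · intro hz
      refine ⟨z - z₀, ?_, sub_add_cancel _ _⟩
      rw [SetLike.mem_coe, LinearMap.mem_ker, map_sub, h0, show shiftSum a (2 * m) z = 1 from hz,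
        sub_self]
    · rintro ⟨y, hy, rfl⟩
      rw [SetLike.mem_coe, LinearMap.mem_ker] at hy
      rw [Set.mem_ofPred_eq, map_add, hy, h0, zero_add]
  rw [himg, Set.ncard_image_of_injective _ (add_left_injective z₀), ← Nat.card_coe_set_eq]
  change Nat.card (LinearMap.ker (shiftSum a (2 * m))) = _
  rw [Module.natCard_eq_pow_finrank (K := ZMod 2), finrank_ker_shiftSum, Nat.card_zmod]

/-- The number of perfect matchings of the Kagomé lattice `K^T(n,m)` with toroidal boundary
condition — the line graph of the honeycomb lattice `H(n, 2m)` on the torus — equals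
`2 ^ (2mn + 1)`. -/
theorem numPM_lineGraph_honeycomb
    (n m : ℕ) (hn : 2 ≤ n) (hm : 1 ≤ m) :
    numPM (honeycomb n (2 * m)).lineGraph = 2 ^ (2 * m * n + 1) := by
  have hb : 2 ≤ 2 * m := by omega
  have : NeZero n := ⟨by omega⟩
  have : NeZero (2 * m) := ⟨by omega⟩
  have hbij := bijOn_assignSubgraph hn hb
  rw [numPM, ← hbij.image_eq, hbij.injOn.ncard_image, ncard_evenAssign,
    ncard_shiftSum_eq_one, mul_comm n]
end

section
/- For every finite simple graph H and every finite connected cubic (3-regular) simple graph G on ν vertices with ν > 4, if G is isomorphic to the line graph L(H), then the number of perfect matchings of G equals M(G) = 2^(ν/6+1), and hence (2 · log M(G)) / ν = (2 · (ν/6 + 1) · log 2) / ν, which tends to (log 2)/3 as ν → ∞: for every ε > 0 there exists N such that for every such G with ν ≥ N, |(2 · Real.log (M(G))) / ν − (Real.log 2)/3| < ε. -/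
/-!
Let `G` be the line graph of `H`. An edge `ab` of `H` meets `deg a + deg b - 2` other edges, so
cubicity of `G` means `deg a + deg b = 5` for every edge. An edge with end degrees `1` and `4` would,
by connectivity, force `G = K₄`, which `ν > 4` excludes. So every edge of `H` joins a vertex of
degree 2 to one of degree 3. In terms of `G`: the vertex set is partitioned into pairs (the fibres of
`s : V → S`, one for each vertex of degree 2) and into triples (the fibres of `t : V → T`, one for each
vertex of degree 3), and two vertices are adjacent iff they share a pair or a triple
(`exists_fibrations`). Thus `G` is obtained from a cubic multigraph on `T` with edge set `S` by
replacing each vertex with a triangle.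

A perfect matching is determined by the set of pairs that it uses, and a set of pairs arises in this
way iff it meets each triangle an odd number of times (`numPM_eq_card_sols`). This is an affine linear
system over `ZMod 2`. By connectivity the range of its linear part is the hyperplane of vectors of
total zero, of size `2 ^ (|T| - 1)`. The number `|T|` is even because `2 |S| = ν = 3 |T|`, so the
constant vector `1` is in the range, and the number of solutions is
`2 ^ (|S| - |T| + 1) = 2 ^ (ν / 6 + 1)` (`card_sols`).
-/

open SimpleGraph

/-! ### Counting the solutions of the parity system -/

/-- The set of solutions of the parity system: functions on pairs with odd sum over each triangle.
They are counted by comparing the sizes of the fibres of the linear map `A : (S → ZMod 2) → (T → ZMod 2)`,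
whose range is the kernel of the total `B : (T → ZMod 2) → ZMod 2`. -/
theorem card_sols {V S T : Type} [Fintype V] [Fintype S] [Fintype T] [DecidableEq S] [DecidableEq T]
    (G : SimpleGraph V) (s : V → S) (t : V → T)
    (hs : ∀ w, (Finset.univ.filter fun e => s e = w).card = 2)
    (ht : ∀ w, (Finset.univ.filter fun e => t e = w).card = 3)
    (hadj : ∀ e f, G.Adj e f → s e = s f ∨ t e = t f)
    (hc : G.Connected) :
    (Finset.univ.filter fun x : S → ZMod 2 =>
      ∀ w, ∑ e with t e = w, x (s e) = 1).card = 2 ^ (Fintype.card V / 6 + 1) := by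
  classical
  have h2 : Fintype.card V = 2 * Fintype.card S := by
    rw [← Finset.card_univ, Finset.card_eq_sum_card_fiberwise (f := s) (t := Finset.univ) (by simp)]
    simp [hs, mul_comm]
  have h3 : Fintype.card V = 3 * Fintype.card T := by
    rw [← Finset.card_univ, Finset.card_eq_sum_card_fiberwise (f := t) (t := Finset.univ) (by simp)]
    simp [ht, mul_comm]
  have tsurj : ∀ w, ∃ e, t e = w := fun w => by
    obtain ⟨e, he⟩ := Finset.card_pos.1 (by rw [ht w]; norm_num :
      0 < (Finset.univ.filter fun e => t e = w).card)
    exact ⟨e, by simpa using he⟩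
  obtain ⟨e₀⟩ := hc.nonempty
  let A : (S → ZMod 2) →+ (T → ZMod 2) :=
    { toFun := fun x w => ∑ e with t e = w, x (s e)
      map_zero' := by ext; simp
      map_add' := fun x y => by ext; simp [Finset.sum_add_distrib] }
  let B : (T → ZMod 2) →+ ZMod 2 :=
    { toFun := fun y => ∑ w, y w
      map_zero' := by simp
      map_add' := fun x y => by simp [Finset.sum_add_distrib] }
  have char2 : ∀ y : T → ZMod 2, y + y = 0 := fun y => by
    ext w; exact CharTwo.add_self_eq_zero _
  -- the total of `A x` counts every value of `x` twice
  have hBA : ∀ x, B (A x) = 0 := fun x => by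
    change ∑ w, ∑ e with t e = w, x (s e) = 0
    rw [Finset.sum_fiberwise, ← Finset.sum_fiberwise (g := s)]
    refine Finset.sum_eq_zero fun w _ => ?_
    rw [Finset.sum_congr rfl (g := fun _ => x w) (by simp +contextual), Finset.sum_const, hs]
    exact (two_nsmul _).trans (CharTwo.add_self_eq_zero _)
  -- for an edge inside a pair, the sum is the image under `A` of the indicator of that pair
  have hstep : ∀ e f, G.Adj e f → Pi.single (t e) 1 + Pi.single (t f) 1 ∈ A.range := fun e f hef => by
    rcases hadj e f hef with h | h
    · have hset : (Finset.univ.filter fun g => s g = s e) = {e, f} := by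
        symm
        apply Finset.eq_of_subset_of_card_le
        · intro g; simp only [Finset.mem_insert, Finset.mem_singleton, Finset.mem_filter,
            Finset.mem_univ, true_and]
          rintro (rfl | rfl) <;> simp [h]
        · rw [hs, Finset.card_pair hef.ne]
      refine ⟨Pi.single (s e) 1, ?_⟩
      ext w
      change ∑ g with t g = w, (Pi.single (s e) 1 : S → ZMod 2) (s g) = _
      simp only [Pi.single_apply, Finset.sum_filter]
      have : ∀ g, (if t g = w then if s g = s e then (1 : ZMod 2) else 0 else 0)
        = if s g = s e then (if t g = w then 1 else 0) else 0 := fun g => by split_ifs <;> rfl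
      simp only [this]
      rw [← Finset.sum_filter, hset, Finset.sum_pair hef.ne]
      simp [Pi.single_apply, eq_comm]
    · rw [h, char2]; exact zero_mem _
  -- connectivity propagates this to any two vertices
  have hpair : ∀ e, Pi.single (t e) 1 + Pi.single (t e₀) 1 ∈ A.range := fun e => by
    obtain ⟨p⟩ := hc.preconnected e e₀
    induction p with
    | nil => rw [char2]; exact zero_mem _
    | @cons u v w h p ih =>
      have := add_mem (hstep u v h) ih
      rwa [add_assoc, ← add_assoc (Pi.single (t v) 1), char2, zero_add] at this
  -- a vector of total zero is a combination of these sums, so it lies in the range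
  have hrange : ∀ y, B y = 0 → y ∈ A.range := fun y hy => by
    have : y = ∑ w, y w • (Pi.single w 1 + Pi.single (t e₀) 1 : T → ZMod 2) := by
      simp only [smul_add, Finset.sum_add_distrib, ← Finset.sum_smul]
      rw [show ∑ w, y w = 0 from hy, zero_smul, add_zero]
      exact pi_eq_sum_univ' y
    rw [this]
    refine sum_mem fun w _ => ?_
    obtain ⟨e, rfl⟩ := tsurj w
    generalize y (t e) = c
    have : c = 0 ∨ c = 1 := by revert c; decide
    rcases this with rfl | rfl
    · rw [zero_smul]; exact zero_mem _
    · rw [one_smul]; exact hpair e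
  -- `2 * |S| = |V| = 3 * |T|`, so `|T|` is even; hence the constant vector `1` has total `0`
  obtain ⟨j, hj⟩ : ∃ j, Fintype.card T = 2 * j := ⟨Fintype.card T / 2, by omega⟩
  have hB1 : B 1 = 0 := by
    change ∑ w : T, (1 : ZMod 2) = 0
    rw [Finset.sum_const, Finset.card_univ, hj, mul_nsmul, two_nsmul, CharTwo.add_self_eq_zero,
      smul_zero]
  have hker : 2 ^ Fintype.card T = 2 * (Finset.univ.filter fun y => B y = 0).card := by
    have : Fintype.card (T → ZMod 2) = 2 ^ Fintype.card T := by simp [ZMod.card]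
    rw [← this, ← Finset.card_univ,
      Finset.card_eq_sum_card_fiberwise (f := B) (t := Finset.univ) (by simp)]
    rw [Finset.sum_congr rfl (g := fun _ => (Finset.univ.filter fun y => B y = 0).card)]
    · simp [ZMod.card]
    · intro c _
      refine AddMonoidHom.card_fiber_eq_of_mem_range B ?_ ⟨0, map_zero _⟩
      exact ⟨Pi.single (t e₀) c, by simp [B]⟩
  have hdom : 2 ^ Fintype.card S = (Finset.univ.filter fun y => B y = 0).card *
      (Finset.univ.filter fun x => A x = 1).card := by
    have : Fintype.card (S → ZMod 2) = 2 ^ Fintype.card S := by simp [ZMod.card]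
    rw [← this, ← Finset.card_univ, Finset.card_eq_sum_card_fiberwise (f := A)
      (t := Finset.univ.filter fun y => B y = 0) (by intro x _; simp [hBA])]
    rw [Finset.sum_congr rfl (g := fun _ => (Finset.univ.filter fun x => A x = 1).card)]
    · simp
    · intro y hy
      exact AddMonoidHom.card_fiber_eq_of_mem_range A (hrange y (by simpa using hy))
        (hrange 1 hB1)
  have hA : (Finset.univ.filter fun x : S → ZMod 2 =>
      ∀ w, ∑ e with t e = w, x (s e) = 1) = Finset.univ.filter fun x => A x = 1 := by
    ext x
    simp only [Finset.mem_filter, Finset.mem_univ, true_and, funext_iff]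
    rfl
  rw [hA]
  have hS : Fintype.card S = 3 * j := by omega
  have hV : Fintype.card V / 6 = j := by omega
  rw [hV]
  rw [hS] at hdom
  rw [hj] at hker
  have h0 : 2 ^ (2 * j) * (Finset.univ.filter fun x => A x = 1).card = 2 ^ (2 * j) * 2 ^ (j + 1) := by
    rw [hker, mul_assoc, ← hdom, ← hker, ← pow_add, ← pow_succ']
    congr 1; omega
  exact Nat.eq_of_mul_eq_mul_left (by positivity) h0

/-! ### Perfect matchings as solutions of the parity system -/

/-- The subgraph of `G` attached to a set of pairs with indicator function `x`: the chosen pairs are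
matched, and two vertices of a triangle are matched when neither of them lies in a chosen pair. It is a
perfect matching when the number of vertices of each triangle lying in chosen pairs is odd. -/
def toMatching {V S T : Type} (G : SimpleGraph V) (s : V → S) (t : V → T) (x : S → ZMod 2) :
    G.Subgraph where
  verts := Set.univ
  Adj e f := G.Adj e f ∧ ((s e = s f ∧ x (s e) = 1) ∨ (t e = t f ∧ x (s e) = 0 ∧ x (s f) = 0))
  adj_sub h := h.1
  edge_vert _ := trivial
  symm := by
    constructor
    rintro e f ⟨h, h' | h'⟩
    · exact ⟨h.symm, .inl ⟨h'.1.symm, h'.1 ▸ h'.2⟩⟩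
    · exact ⟨h.symm, .inr ⟨h'.1.symm, h'.2.2, h'.2.1⟩⟩

/-- Perfect matchings correspond to the sets of pairs meeting every triangle in an odd number of
vertices: this number is 3 or 1, which leaves 0 or 2 vertices to be matched inside the triangle. -/
theorem numPM_eq_card_sols {V S T : Type} [Fintype V] [Fintype S] [Fintype T]
    [DecidableEq S] [DecidableEq T]
    (G : SimpleGraph V) (s : V → S) (t : V → T)
    (hs : ∀ w, (Finset.univ.filter fun e => s e = w).card = 2)
    (ht : ∀ w, (Finset.univ.filter fun e => t e = w).card = 3)
    (hinj : ∀ e f, s e = s f → t e = t f → e = f)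
    (hadj : ∀ e f, G.Adj e f ↔ e ≠ f ∧ (s e = s f ∨ t e = t f)) :
    numPM G = (Finset.univ.filter fun x : S → ZMod 2 =>
      ∀ w, ∑ e with t e = w, x (s e) = 1).card := by
  classical
  have z2 : ∀ c : ZMod 2, c = 0 ∨ c = 1 := by decide
  -- `f` is the other element of the pair of `e`
  have hsf : ∀ e, ∃ f, f ≠ e ∧ ∀ g, s g = s e ↔ g = e ∨ g = f := fun e => by
    obtain ⟨a, b, hab, h⟩ := Finset.card_eq_two.1 (hs (s e))
    simp only [Finset.ext_iff, Finset.mem_filter, Finset.mem_univ, true_and, Finset.mem_insert,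
      Finset.mem_singleton] at h
    rcases (h e).1 rfl with rfl | rfl
    · exact ⟨b, hab.symm, h⟩
    · exact ⟨a, hab, fun g => (h g).trans or_comm⟩
  have hsw : ∀ w, ∃ e, s e = w := fun w => by
    obtain ⟨e, he⟩ := Finset.card_pos.1 (by rw [hs w]; norm_num :
      0 < (Finset.univ.filter fun e => s e = w).card)
    exact ⟨e, by simpa using he⟩
  have htf : ∀ w, ∃ a b c, a ≠ b ∧ a ≠ c ∧ b ≠ c ∧ (∀ g, t g = w ↔ g = a ∨ g = b ∨ g = c) ∧
      ∀ x : S → ZMod 2, ∑ e with t e = w, x (s e) = x (s a) + x (s b) + x (s c) := fun w => by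
    obtain ⟨a, b, c, hab, hac, hbc, h⟩ := Finset.card_eq_three.1 (ht w)
    refine ⟨a, b, c, hab, hac, hbc, fun g => ?_, fun x => ?_⟩
    · simpa using Finset.ext_iff.1 h g
    · rw [h, Finset.sum_insert (by simp [hab, hac]), Finset.sum_pair hbc, add_assoc]
  -- the triangle of `e`, listed with `e` first
  have htr : ∀ e, ∃ b c, e ≠ b ∧ e ≠ c ∧ b ≠ c ∧ (∀ g, t g = t e ↔ g = e ∨ g = b ∨ g = c) ∧
      ∀ x : S → ZMod 2, ∑ g with t g = t e, x (s g) = x (s e) + x (s b) + x (s c) := fun e => by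
    obtain ⟨a, b, c, hab, hac, hbc, h, h'⟩ := htf (t e)
    rcases (h e).1 rfl with rfl | rfl | rfl
    · exact ⟨b, c, hab, hac, hbc, h, h'⟩
    · exact ⟨a, c, hab.symm, hbc, hac, fun g => by rw [h]; tauto, fun x => by rw [h']; ring⟩
    · exact ⟨a, b, hac.symm, hbc.symm, hab, fun g => by rw [h]; tauto, fun x => by rw [h']; ring⟩
  -- a solution of the parity system gives a perfect matching
  have fwd : ∀ x : S → ZMod 2, (∀ w, ∑ e with t e = w, x (s e) = 1) →
      (toMatching G s t x).IsPerfectMatching := fun x hx => by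
    rw [Subgraph.isPerfectMatching_iff]
    intro e
    rcases z2 (x (s e)) with h0 | h1
    · obtain ⟨b, c, hb, hc, hbc, h, h'⟩ := htr e
      have hsum := hx (t e)
      rw [h', h0, zero_add] at hsum
      have key : ∀ b c, e ≠ b → (∀ g, t g = t e ↔ g = e ∨ g = b ∨ g = c) → x (s b) = 0 →
          x (s c) = 1 → ∃! f, (toMatching G s t x).Adj e f := by
        intro b c hb h hb0 hc1
        have htb : t e = t b := ((h b).2 (by simp)).symm
        refine ⟨b, ⟨(hadj _ _).2 ⟨hb, .inr htb⟩, .inr ⟨htb, h0, hb0⟩⟩, ?_⟩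
        rintro f ⟨hf, ⟨-, hf1⟩ | ⟨hf1, -, hf0⟩⟩
        · rw [h0] at hf1; exact absurd hf1 (by decide)
        · rcases (h f).1 hf1.symm with rfl | rfl | rfl
          · exact absurd rfl hf.ne
          · rfl
          · rw [hc1] at hf0; exact absurd hf0 (by decide)
      rcases z2 (x (s b)) with hb0 | hb1
      · exact key b c hb h hb0 (by rwa [hb0, zero_add] at hsum)
      · refine key c b hc (fun g => by rw [h]; tauto) ?_ hb1
        simpa [hb1] using hsum
    · obtain ⟨f, hf, h⟩ := hsf e
      have hsef : s e = s f := ((h f).2 (.inr rfl)).symm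
      refine ⟨f, ⟨(hadj _ _).2 ⟨hf.symm, .inl hsef⟩, .inl ⟨hsef, h1⟩⟩, ?_⟩
      rintro g ⟨hg, ⟨hg1, -⟩ | ⟨-, hg0, -⟩⟩
      · rcases (h g).1 hg1.symm with rfl | rfl
        · exact absurd rfl hg.ne
        · rfl
      · rw [h1] at hg0; exact absurd hg0 (by decide)
  -- every perfect matching arises in this way
  have bwd : ∀ M : G.Subgraph, M.IsPerfectMatching →
      ∃ x : S → ZMod 2, (∀ w, ∑ e with t e = w, x (s e) = 1) ∧ toMatching G s t x = M := by
    intro M hM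
    rw [Subgraph.isPerfectMatching_iff] at hM
    have huniq : ∀ {e f g}, M.Adj e f → M.Adj e g → f = g := fun h h' => (hM _).unique h h'
    let x : S → ZMod 2 := fun w => if ∃ e f, M.Adj e f ∧ s e = w ∧ s f = w then 1 else 0
    have hx1 : ∀ e f, M.Adj e f → s e = s f → x (s e) = 1 := fun e f h h' =>
      if_pos ⟨e, f, h, rfl, h'.symm⟩
    have hx0 : ∀ e f, M.Adj e f → s e ≠ s f → x (s e) = 0 := by
      intro e f h h'
      refine if_neg ?_
      rintro ⟨a, b, hab, ha, hb⟩
      obtain ⟨e', he', hfib⟩ := hsf e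
      have hne := hab.adj_sub.ne
      have hee' : M.Adj e e' := by
        rcases (hfib a).1 ha with rfl | rfl <;> rcases (hfib b).1 hb with rfl | rfl
        · exact absurd rfl hne
        · exact hab
        · exact hab.symm
        · exact absurd rfl hne
      exact h' ((hfib f).2 (.inr (huniq h hee'))).symm
    have hiff : ∀ e f, M.Adj e f → (x (s e) = 1 ↔ s e = s f) := fun e f h =>
      ⟨fun h1 => by
        by_contra h'
        rw [hx0 e f h h'] at h1; exact absurd h1 (by decide), hx1 e f h⟩
    have htri : ∀ e f, M.Adj e f → x (s e) = 0 → t e = t f := fun e f h h0 => by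
      rcases ((hadj e f).1 h.adj_sub).2 with h' | h'
      · rw [hx1 e f h h'] at h0; exact absurd h0 (by decide)
      · exact h'
    have hx0' : ∀ e f, M.Adj e f → t e = t f → x (s e) = 0 ∧ x (s f) = 0 := by
      intro e f h h'
      have hne : s e ≠ s f := fun h'' => h.adj_sub.ne (hinj _ _ h'' h')
      exact ⟨hx0 _ _ h hne, hx0 _ _ h.symm hne.symm⟩
    have hsol : ∀ w, ∑ e with t e = w, x (s e) = 1 := by
      intro w
      -- if `M` matches `e` to `f` inside a triangle, the third vertex must be matched outside
      have inner : ∀ e f, M.Adj e f → t e = t f → ∑ g with t g = t e, x (s g) = 1 := by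
        intro e f h h'
        obtain ⟨b, c, hb, hc, hbc, hfib, hsum⟩ := htr e
        have key : ∀ b c, b ≠ c → e ≠ c → t e = t b → t e = t c →
            (∀ g, t g = t e ↔ g = e ∨ g = b ∨ g = c) →
            M.Adj e b → x (s e) + x (s b) + x (s c) = 1 := by
          intro b c hbc hec hb hc hfib h
          obtain ⟨h1, h2⟩ := hx0' e b h hb
          rw [h1, h2, zero_add, zero_add]
          refine (z2 _).resolve_left fun h0 => ?_
          obtain ⟨d, hd, -⟩ := hM c
          rcases (hfib d).1 ((htri c d hd h0).symm.trans hc.symm) with rfl | rfl | rfl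
          · exact hbc (huniq h hd.symm)
          · exact hec (huniq h.symm hd.symm)
          · exact hd.adj_sub.ne rfl
        rw [hsum]
        have hb' : t e = t b := ((hfib b).2 (by simp)).symm
        have hc' : t e = t c := ((hfib c).2 (by simp)).symm
        rcases (hfib f).1 h'.symm with rfl | rfl | rfl
        · exact absurd rfl h.adj_sub.ne
        · exact key f c hbc hc hb' hc' hfib h
        · have := key f b hbc.symm hb hc' hb' (fun g => by rw [hfib]; tauto) h
          rw [← this]; ring
      obtain ⟨a, b, c, hab, hac, hbc, hfib, hsum⟩ := htf w
      by_cases hex : ∃ e, t e = w ∧ x (s e) = 0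
      · obtain ⟨e, rfl, he⟩ := hex
        obtain ⟨f, hf, -⟩ := hM e
        exact inner e f hf (htri e f hf he)
      · push Not at hex
        have h1 : ∀ e, t e = w → x (s e) = 1 := fun e he => (z2 _).resolve_left (hex e he)
        rw [hsum, h1 a ((hfib a).2 (by simp)), h1 b ((hfib b).2 (by simp)),
          h1 c ((hfib c).2 (by simp))]
        decide
    refine ⟨x, hsol, ?_⟩
    have hle : ∀ e f, M.Adj e f → (toMatching G s t x).Adj e f := by
      intro e f h
      refine ⟨h.adj_sub, ?_⟩
      rcases ((hadj e f).1 h.adj_sub).2 with h' | h'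
      · exact .inl ⟨h', hx1 e f h h'⟩
      · exact .inr ⟨h', hx0' e f h h'⟩
    -- `M` is contained in the perfect matching of `x`, and both are perfect, so they agree
    have hP := Subgraph.isPerfectMatching_iff.1 (fwd x hsol)
    apply Subgraph.ext
    · ext e
      obtain ⟨f, hf, -⟩ := hM e
      exact ⟨fun _ => hf.fst_mem, fun _ => trivial⟩
    · ext e f
      refine ⟨fun h => ?_, hle e f⟩
      obtain ⟨g, hg, -⟩ := hM e
      rwa [(hP e).unique h (hle e g hg)]
  have inj : Function.Injective (toMatching G s t) := by
    have key : ∀ x y : S → ZMod 2, toMatching G s t x = toMatching G s t y →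
        ∀ w, x w = 1 → y w = 1 := by
      intro x y h w hw
      obtain ⟨e, rfl⟩ := hsw w
      obtain ⟨f, hf, hfib⟩ := hsf e
      have hsef : s e = s f := ((hfib f).2 (.inr rfl)).symm
      have : (toMatching G s t x).Adj e f :=
        ⟨(hadj _ _).2 ⟨hf.symm, .inl hsef⟩, .inl ⟨hsef, hw⟩⟩
      rw [h] at this
      rcases this.2 with h' | h'
      · exact h'.2
      · exact absurd (hinj _ _ hsef h'.1).symm hf
    intro x y h
    ext w
    rcases z2 (x w) with h0 | h1
    · rcases z2 (y w) with h0' | h1'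
      · rw [h0, h0']
      · rw [key y x h.symm w h1', h1']
    · rw [key x y h w h1, h1]
  have himg : {M : G.Subgraph | M.IsPerfectMatching} = toMatching G s t ''
      ((Finset.univ.filter fun x : S → ZMod 2 => ∀ w, ∑ e with t e = w, x (s e) = 1 :
        Finset (S → ZMod 2)) : Set (S → ZMod 2)) := by
    ext M
    simp only [Set.mem_ofPred_eq, Set.mem_image, Finset.coe_filter, Finset.mem_univ, true_and]
    refine ⟨bwd M, ?_⟩
    rintro ⟨x, hx, rfl⟩
    exact fwd x hx
  rw [numPM, himg, Set.ncard_image_of_injective _ inj, Set.ncard_coe_finset]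

/-! ### Root graphs of cubic line graphs -/

/-- The structure of a connected cubic line graph other than `K₄`: every edge of the root graph `H`
joins a vertex of degree 2 to a vertex of degree 3, and `s`, `t` send a vertex of `G` to these two
ends of the corresponding edge. -/
theorem exists_fibrations {V W : Type} [Fintype V] [Fintype W] [DecidableEq W]
    (G : SimpleGraph V) [DecidableRel G.Adj] (H : SimpleGraph W) [DecidableRel H.Adj]
    (φ : G ≃g H.lineGraph) (hc : G.Connected) (hd : ∀ v, G.degree v = 3)
    (hV : 4 < Fintype.card V) :
    ∃ (s : V → {w // H.degree w = 2}) (t : V → {w // H.degree w = 3}),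
      (∀ w, (Finset.univ.filter fun e => s e = w).card = 2) ∧
      (∀ w, (Finset.univ.filter fun e => t e = w).card = 3) ∧
      (∀ e f, s e = s f → t e = t f → e = f) ∧
      (∀ e f, G.Adj e f ↔ e ≠ f ∧ (s e = s f ∨ t e = t f)) := by
  classical
  have φinj : ∀ {e f}, (φ e).val = (φ f).val → e = f := fun h => φ.injective (Subtype.ext h)
  have hadj : ∀ e f, G.Adj e f ↔ e ≠ f ∧ ∃ w, w ∈ (φ e).val ∧ w ∈ (φ f).val := fun e f => by
    rw [← φ.map_adj_iff]
    change (φ e ≠ φ f ∧ _) ↔ _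
    rw [φ.injective.ne_iff]
    rfl
  have hinc : ∀ w, (Finset.univ.filter fun e => w ∈ (φ e).val).card = H.degree w := fun w => by
    rw [← card_incidenceFinset_eq_degree]
    refine Finset.card_bij (fun e _ => (φ e).val) ?_ (fun _ _ _ _ h => φinj h) ?_
    · intro e he
      rw [mem_incidenceFinset]
      exact ⟨(φ e).2, by simpa using he⟩
    · intro p hp
      rw [mem_incidenceFinset] at hp
      exact ⟨φ.symm ⟨p, hp.1⟩, by simpa using hp.2, by simp⟩
  -- the edges other than `ab` that meet `ab` number `deg a + deg b - 2`, which is `3`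
  have hsum : ∀ e a b, (φ e).val = s(a, b) → H.degree a + H.degree b = 5 := by
    intro e a b he
    have hab : a ≠ b := fun h => by
      have := (φ e).2
      rw [he, mem_edgeSet] at this
      exact this.ne h
    have hi : (Finset.univ.filter fun e => a ∈ (φ e).val) ∩
        (Finset.univ.filter fun e => b ∈ (φ e).val) = {e} := by
      ext f
      simp only [Finset.mem_inter, Finset.mem_filter, Finset.mem_univ, true_and,
        Finset.mem_singleton]
      rw [Sym2.mem_and_mem_iff hab, ← he]
      exact ⟨φinj, fun h => by rw [h]⟩
    have hu : (Finset.univ.filter fun e => a ∈ (φ e).val) ∪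
        (Finset.univ.filter fun e => b ∈ (φ e).val) = insert e (G.neighborFinset e) := by
      ext f
      simp only [Finset.mem_union, Finset.mem_filter, Finset.mem_univ, true_and,
        Finset.mem_insert, mem_neighborFinset, hadj, he, Sym2.mem_iff]
      constructor
      · intro h
        by_cases hf : f = e
        · exact .inl hf
        · rcases h with h | h
          · exact .inr ⟨Ne.symm hf, a, .inl rfl, h⟩
          · exact .inr ⟨Ne.symm hf, b, .inr rfl, h⟩
      · rintro (rfl | ⟨-, w, rfl | rfl, h⟩)
        · simp [he]
        · exact .inl h
        · exact .inr h
    have := Finset.card_union_add_card_inter (Finset.univ.filter fun e => a ∈ (φ e).val)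
        (Finset.univ.filter fun e => b ∈ (φ e).val)
    rw [hi, hu, Finset.card_insert_of_notMem (by simp), card_neighborFinset_eq_degree, hd,
      Finset.card_singleton, hinc, hinc] at this
    exact this.symm
  have hpos : ∀ e w, w ∈ (φ e).val → 1 ≤ H.degree w := fun e w h => by
    rw [← hinc]; exact Finset.card_pos.2 ⟨e, by simpa using h⟩
  -- an edge at a vertex `w` of degree 4 has a leaf as its other end, so every edge adjacent to it
  -- contains `w` too; by connectivity all edges do, and there are only four of them
  have hno4 : ∀ e w, w ∈ (φ e).val → H.degree w ≠ 4 := by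
    intro e w hw h4
    have hstep : ∀ e f, G.Adj e f → w ∈ (φ e).val → w ∈ (φ f).val := by
      intro e f hef he
      obtain ⟨b, hb⟩ := he
      have h1 : H.degree b = 1 := by have := hsum e w b hb; omega
      obtain ⟨hne, u, hu, hu'⟩ := (hadj e f).1 hef
      rw [hb, Sym2.mem_iff] at hu
      rcases hu with rfl | rfl
      · exact hu'
      · rw [← hinc] at h1
        exact absurd (Finset.card_le_one.1 h1.le e (by simp [hb]) f (by simpa using hu')) hne
    have hall : ∀ f, w ∈ (φ f).val := fun f => by
      obtain ⟨p⟩ := hc.preconnected e f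
      induction p with
      | nil => exact hw
      | cons h p ih => exact ih (hstep _ _ h hw)
    have := hinc w
    rw [Finset.filter_true_of_mem (fun f _ => hall f), Finset.card_univ, h4] at this
    omega
  have hends : ∀ e, ∃ p : {w // H.degree w = 2} × {w // H.degree w = 3},
      (φ e).val = s(p.1.1, p.2.1) := by
    intro e
    obtain ⟨a, b, hab⟩ : ∃ a b, (φ e).val = s(a, b) := by
      induction h : (φ e).val with | _ a b => exact ⟨a, b, rfl⟩
    have ha : a ∈ (φ e).val := by simp [hab]
    have hb : b ∈ (φ e).val := by simp [hab]
    have h1 := hsum e a b hab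
    have h2 := hpos e a ha
    have h3 := hpos e b hb
    have h4 := hno4 e a ha
    have h5 := hno4 e b hb
    have : (H.degree a = 2 ∧ H.degree b = 3) ∨ (H.degree a = 3 ∧ H.degree b = 2) := by omega
    rcases this with h | h
    · exact ⟨(⟨a, h.1⟩, ⟨b, h.2⟩), hab⟩
    · exact ⟨(⟨b, h.2⟩, ⟨a, h.1⟩), hab.trans Sym2.eq_swap⟩
  choose p hp using hends
  have hs : ∀ e (w : {w // H.degree w = 2}), (p e).1 = w ↔ w.1 ∈ (φ e).val := fun e w => by
    rw [hp, Sym2.mem_iff]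
    refine ⟨fun h => .inl (by rw [h]), ?_⟩
    rintro (h | h)
    · exact Subtype.ext h.symm
    · have h2 := w.2; rw [h, (p e).2.2] at h2; omega
  have ht : ∀ e (w : {w // H.degree w = 3}), (p e).2 = w ↔ w.1 ∈ (φ e).val := fun e w => by
    rw [hp, Sym2.mem_iff]
    refine ⟨fun h => .inr (by rw [h]), ?_⟩
    rintro (h | h)
    · have h2 := w.2; rw [h, (p e).1.2] at h2; omega
    · exact Subtype.ext h.symm
  refine ⟨fun e => (p e).1, fun e => (p e).2, fun w => ?_, fun w => ?_, fun e f h h' => ?_,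
    fun e f => ?_⟩
  · simp only [hs, hinc, w.2]
  · simp only [ht, hinc, w.2]
  · replace h : (p e).1 = (p f).1 := h
    replace h' : (p e).2 = (p f).2 := h'
    exact φinj (by rw [hp, hp, h, h'])
  · rw [hadj, hs, ht]
    refine and_congr_right fun _ => ?_
    constructor
    · rintro ⟨w, hw, hw'⟩
      rw [hp, Sym2.mem_iff] at hw'
      rcases hw' with rfl | rfl
      · exact .inl hw
      · exact .inr hw
    · rintro (h | h)
      · exact ⟨_, h, by rw [hp f]; simp⟩
      · exact ⟨_, h, by rw [hp f]; simp⟩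

/-! ### The entropy limit -/

/-- The exponent `ν / 6` is a truncated quotient here; for every `ν > 0` the error lies
in `(0, 2 * log 2 / ν]`. -/
theorem log_bound (ν : ℕ) (ε : ℝ) (hε : 0 < ε) (h : ⌈2 / ε⌉₊ + 1 ≤ ν) :
    |(2 * Real.log ((2 ^ (ν / 6 + 1) : ℕ) : ℝ)) / (ν : ℝ) - Real.log 2 / 3| < ε := by
  have hν : (0 : ℝ) < ν := by exact_mod_cast (by omega : 0 < ν)
  have hlog : 0 < Real.log 2 := Real.log_pos (by norm_num)
  have hlog1 : Real.log 2 < 1 := by linarith [Real.log_two_lt_d9]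
  have hbig : 2 < ε * ν := by
    have h1 : 2 / ε ≤ ⌈2 / ε⌉₊ := Nat.le_ceil _
    have h2 : (⌈2 / ε⌉₊ : ℝ) + 1 ≤ ν := by exact_mod_cast h
    have : 2 / ε < ν := by linarith
    rwa [div_lt_iff₀ hε, mul_comm] at this
  have hlo : (ν : ℝ) < 6 * ((ν / 6 : ℕ) : ℝ) + 6 := by
    exact_mod_cast (by omega : ν < 6 * (ν / 6) + 6)
  have hhi : 6 * ((ν / 6 : ℕ) : ℝ) ≤ ν := by
    exact_mod_cast (by omega : 6 * (ν / 6) ≤ ν)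
  push_cast
  rw [Real.log_pow]
  generalize hq : ((ν / 6 : ℕ) : ℝ) = q at *
  have heq : 2 * (((ν / 6 + 1 : ℕ) : ℝ) * Real.log 2) / ν - Real.log 2 / 3
      = (2 * (q + 1) - ν / 3) * Real.log 2 / ν := by
    push_cast
    rw [hq]; field_simp
  rw [heq, abs_of_nonneg (div_nonneg (mul_nonneg (by linarith) hlog.le) hν.le), div_lt_iff₀ hν]
  have : (2 * (q + 1) - ν / 3) * Real.log 2 ≤ 2 * 1 :=
    mul_le_mul (by linarith) hlog1.le hlog.le (by norm_num)
  linarith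

/-- Every finite connected cubic line graph `G` on `ν > 4` vertices has exactly
`2 ^ (ν/6 + 1)` perfect matchings; consequently the entropy `(2 log M(G)) / ν` of the family
of such graphs tends to `(log 2)/3` as `ν → ∞`: for every `ε > 0` there is an `N` such that
every such graph with `ν ≥ N` satisfies `|(2 log M(G)) / ν − (log 2)/3| < ε`. -/
theorem entropy_of_cubic_lineGraphs :
    (∀ (V : Type) [Fintype V] (G : SimpleGraph V) [DecidableRel G.Adj],
      G.Connected → (∀ v : V, G.degree v = 3) →
      (∃ (W : Type) (_ : Fintype W) (H : SimpleGraph W), Nonempty (G ≃g H.lineGraph)) →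
      4 < Fintype.card V →
      numPM G = 2 ^ (Fintype.card V / 6 + 1)) ∧
    (∀ ε : ℝ, 0 < ε → ∃ N : ℕ,
      ∀ (V : Type) [Fintype V] (G : SimpleGraph V) [DecidableRel G.Adj],
        G.Connected → (∀ v : V, G.degree v = 3) →
        (∃ (W : Type) (_ : Fintype W) (H : SimpleGraph W), Nonempty (G ≃g H.lineGraph)) →
        4 < Fintype.card V → N ≤ Fintype.card V →
        |(2 * Real.log (numPM G)) / (Fintype.card V : ℝ) - Real.log 2 / 3| < ε) := by
  have part1 : ∀ (V : Type) [Fintype V] (G : SimpleGraph V) [DecidableRel G.Adj],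
      G.Connected → (∀ v : V, G.degree v = 3) →
      (∃ (W : Type) (_ : Fintype W) (H : SimpleGraph W), Nonempty (G ≃g H.lineGraph)) →
      4 < Fintype.card V → numPM G = 2 ^ (Fintype.card V / 6 + 1) := by
    classical
    rintro V _ G _ hc hd ⟨W, _, H, ⟨φ⟩⟩ hV
    obtain ⟨s, t, hs, ht, hinj, hadj⟩ := exists_fibrations G H φ hc hd hV
    rw [numPM_eq_card_sols G s t hs ht hinj hadj]
    exact card_sols G s t hs ht (fun e f h => ((hadj e f).1 h).2) hc
  refine ⟨part1, fun ε hε => ⟨⌈2 / ε⌉₊ + 1, ?_⟩⟩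
  intro V _ G _ hc hd hH hV hN
  rw [part1 V G hc hd hH hV]
  exact log_bound _ ε hε hN
end
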